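/- arXiv:1607.03587 — 3 statements merged into one kernel-verified Lean document; each statement's English description precedes it below -/
import Mathlib

section
/- Let (e_i) be a normalized, 1-spreading, bimonotone Schauder basis of a Banach space X which is not weakly null. Then (e_i) is boundedly complete if and only if c0 does not embed into X. -/
open Filter Finset Topology NormedSpace
open scoped NNReal

/-- `e` is a Schauder basis of `X`: every vector has a unique expansion whose partial
sums converge in norm. -/
def IsSchauderBasis {X : Type} [NormedAddCommGroup X] [NormedSpace ℝ X] (e : ℕ → X) : Prop :=
  ∀ x : X, ∃! a : ℕ → ℝ,
    Tendsto (fun n => ∑ i ∈ Finset.range n, a i • e i) atTop (𝓝 x)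

/-- A sequence is weakly null if it tends to `0` in the weak topology. -/
def WeaklyNull {X : Type} [NormedAddCommGroup X] [NormedSpace ℝ X] (z : ℕ → X) : Prop :=
  ∀ f : X →L[ℝ] ℝ, Tendsto (fun n => f (z n)) atTop (𝓝 (0 : ℝ))

/-- `e` is `1`-spreading. -/
def IsOneSpreading {X : Type} [NormedAddCommGroup X] [NormedSpace ℝ X] (e : ℕ → X) : Prop :=
  ∀ (k : ℕ) (a : ℕ → ℝ) (n : ℕ → ℕ), StrictMono n →
    ‖∑ i ∈ Finset.range k, a i • e (n i)‖ = ‖∑ i ∈ Finset.range k, a i • e i‖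

/-- `e` is bimonotone: interval projections of (finitely supported) expansions have norm
at most the norm of the whole vector. -/
def IsBimonotone {X : Type} [NormedAddCommGroup X] [NormedSpace ℝ X] (e : ℕ → X) : Prop :=
  ∀ (N m n : ℕ) (a : ℕ → ℝ),
    ‖∑ i ∈ (Finset.range N).filter (fun i => m ≤ i ∧ i ≤ n), a i • e i‖ ≤
      ‖∑ i ∈ Finset.range N, a i • e i‖

/-- `Z` embeds (isomorphically) into `W`. -/
def Embeds (Z W : Type) [NormedAddCommGroup Z] [NormedSpace ℝ Z]
    [NormedAddCommGroup W] [NormedSpace ℝ W] : Prop :=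
  ∃ (T : Z →ₗ[ℝ] W) (c C : ℝ), 0 < c ∧ 0 < C ∧
    ∀ z : Z, c * ‖z‖ ≤ ‖T z‖ ∧ ‖T z‖ ≤ C * ‖z‖

/-- The space `c₀` of real sequences vanishing at infinity. -/
noncomputable abbrev spaceC0 : Type := ZeroAtInftyContinuousMap ℕ ℝ

/-- `e` is boundedly complete. -/
def BoundedlyComplete {X : Type} [NormedAddCommGroup X] [NormedSpace ℝ X] (e : ℕ → X) : Prop :=
  ∀ a : ℕ → ℝ, (∃ C : ℝ, ∀ n, ‖∑ i ∈ Finset.range n, a i • e i‖ ≤ C) →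
    ∃ x : X, Tendsto (fun n => ∑ i ∈ Finset.range n, a i • e i) atTop (𝓝 x)

/-!
If `(e i)` is not boundedly complete, some series `∑ a i • e i` has bounded partial sums and
successive blocks whose norms stay above some `δ > 0`. Shift every block to the right by two
different amounts and subtract. Any finite sum of these differences is a difference of two shifts
of one and the same partial sum, so by spreading it is bounded and the series of differences is
weakly unconditionally Cauchy; interval projections recover each block, which gives the lower
`c₀`-estimate.

Conversely, let `x n` be the images of the unit vectors under an embedding of `c₀`. Their
coordinates tend to zero, so a gliding hump argument extracts a subsequence that is close to
successive blocks of a series with bounded partial sums. Bounded completeness makes that series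
converge, so its blocks tend to zero, although the `x n` are bounded away from zero.
-/

namespace IsSchauderBasis

variable {X : Type} [NormedAddCommGroup X] [NormedSpace ℝ X] {e : ℕ → X}

theorem eq_of_tendsto (he : IsSchauderBasis e) {x : X} {a b : ℕ → ℝ}
    (ha : Tendsto (fun n ↦ ∑ i ∈ range n, a i • e i) atTop (𝓝 x))
    (hb : Tendsto (fun n ↦ ∑ i ∈ range n, b i • e i) atTop (𝓝 x)) : a = b :=
  (he x).unique ha hb

/-- The coefficients of the expansion of a vector in a Schauder basis, as a linear map. -/
noncomputable def coord (he : IsSchauderBasis e) : X →ₗ[ℝ] ℕ → ℝ where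
  toFun x := (he x).exists.choose
  map_add' x y := he.eq_of_tendsto (he (x + y)).exists.choose_spec <| by
    simpa [add_smul, sum_add_distrib] using
      (he x).exists.choose_spec.add (he y).exists.choose_spec
  map_smul' r x := he.eq_of_tendsto (he (r • x)).exists.choose_spec <| by
    simpa [mul_smul, smul_sum] using (he x).exists.choose_spec.const_smul r

theorem tendsto_sum_coord (he : IsSchauderBasis e) (x : X) :
    Tendsto (fun n ↦ ∑ i ∈ range n, he.coord x i • e i) atTop (𝓝 x) :=
  (he x).exists.choose_spec

theorem coord_eq_of_tendsto (he : IsSchauderBasis e) {x : X} {a : ℕ → ℝ}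
    (ha : Tendsto (fun n ↦ ∑ i ∈ range n, a i • e i) atTop (𝓝 x)) : he.coord x = a :=
  he.eq_of_tendsto (he.tendsto_sum_coord x) ha

theorem coord_basis (he : IsSchauderBasis e) (j : ℕ) : he.coord (e j) = Pi.single j 1 := by
  refine he.coord_eq_of_tendsto (tendsto_const_nhds.congr' ?_)
  filter_upwards [eventually_gt_atTop j] with n hn
  simp [Pi.single_apply, hn]

theorem ne_zero (he : IsSchauderBasis e) (j : ℕ) : e j ≠ 0 := fun h ↦ by
  simpa [h] using congrFun (he.coord_basis j) j

/-- The sequence of partial sums of the expansion of `x`, as a linear map into the Banach space of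
convergent sequences, which is encoded as `C(OnePoint ℕ, X)`; the value at `∞` is `x`. -/
noncomputable def partialSums (he : IsSchauderBasis e) : X →ₗ[ℝ] C(OnePoint ℕ, X) where
  toFun x := OnePoint.continuousMapMkNat _ x (he.tendsto_sum_coord x)
  map_add' x y := by
    ext (_ | n)
    · rfl
    · change ∑ i ∈ range n, he.coord (x + y) i • e i =
        ∑ i ∈ range n, he.coord x i • e i + ∑ i ∈ range n, he.coord y i • e i
      simp only [map_add, Pi.add_apply, add_smul, sum_add_distrib]
  map_smul' r x := by
    ext (_ | n)
    · rfl
    · change ∑ i ∈ range n, he.coord (r • x) i • e i = r • ∑ i ∈ range n, he.coord x i • e i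
      simp only [map_smul, Pi.smul_apply, smul_eq_mul, mul_smul, smul_sum]

theorem partialSums_coe (he : IsSchauderBasis e) (x : X) (n : ℕ) :
    he.partialSums x n = ∑ i ∈ range n, he.coord x i • e i := rfl

theorem partialSums_succ_sub (he : IsSchauderBasis e) (x : X) (n : ℕ) :
    he.partialSums x (n + 1 : ℕ) - he.partialSums x n = he.coord x n • e n := by
  simp only [partialSums_coe, sum_range_succ_sub_sum]

theorem eq_partialSums (he : IsSchauderBasis e) {s : C(OnePoint ℕ, X)} (h0 : s (0 : ℕ) = 0)
    (hs : ∀ n : ℕ, s (n + 1 : ℕ) - s n ∈ ℝ ∙ e n) : s = he.partialSums (s OnePoint.infty) := by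
  choose a ha using fun n ↦ Submodule.mem_span_singleton.1 (hs n)
  have hsum (n : ℕ) : ∑ i ∈ range n, a i • e i = s n := by
    simp only [ha, sum_range_sub (fun n : ℕ ↦ s n), h0, sub_zero]
  have hlim : Tendsto (fun n : ℕ ↦ s n) atTop (𝓝 (s OnePoint.infty)) := by
    rw [← Nat.cofinite_eq_atTop, ← cocompact_eq_cofinite, ← coclosedCompact_eq_cocompact]
    exact OnePoint.continuousAt_infty'.1 s.continuous.continuousAt
  have ha_coord : he.coord (s OnePoint.infty) = a :=
    he.coord_eq_of_tendsto (by simpa only [hsum] using hlim)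
  ext (_ | n)
  · rfl
  · exact (by rw [partialSums_coe, ha_coord, hsum] : s n = he.partialSums (s OnePoint.infty) n)

variable [CompleteSpace X]

theorem continuous_partialSums (he : IsSchauderBasis e) : Continuous he.partialSums := by
  refine he.partialSums.continuous_of_seq_closed_graph fun u x s hu hs ↦ ?_
  have hs_apply (p : OnePoint ℕ) : Tendsto (fun k ↦ he.partialSums (u k) p) atTop (𝓝 (s p)) :=
    ((continuous_eval_const p).tendsto s).comp hs
  have hx : s OnePoint.infty = x := tendsto_nhds_unique (hs_apply OnePoint.infty) hu
  rw [← hx]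
  refine he.eq_partialSums ?_ fun n ↦ ?_
  · exact tendsto_nhds_unique (hs_apply (0 : ℕ)) tendsto_const_nhds
  · refine (Submodule.closed_of_finiteDimensional (ℝ ∙ e n)).mem_of_tendsto
      ((hs_apply (n + 1 : ℕ)).sub (hs_apply n)) (Eventually.of_forall fun k ↦ ?_)
    rw [partialSums_succ_sub]
    exact Submodule.smul_mem _ _ (Submodule.mem_span_singleton_self _)

theorem continuous_coord (he : IsSchauderBasis e) (n : ℕ) : Continuous fun x ↦ he.coord x n := by
  obtain ⟨f, -, hf⟩ := exists_dual_vector ℝ (e n) (norm_ne_zero_iff.2 (he.ne_zero n))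
  have hfn : f (e n) ≠ 0 := by simpa [hf] using he.ne_zero n
  have hcoord (x : X) : he.coord x n =
      f (he.partialSums x (n + 1 : ℕ) - he.partialSums x n) / f (e n) := by
    rw [partialSums_succ_sub, map_smul, smul_eq_mul, mul_div_cancel_right₀ _ hfn]
  have heval (p : OnePoint ℕ) : Continuous fun x ↦ he.partialSums x p :=
    (continuous_eval_const p).comp he.continuous_partialSums
  simp only [hcoord]
  exact (f.continuous.comp ((heval _).sub (heval _))).div_const _

/-- A Schauder basis of a Banach space in the sense of `IsSchauderBasis`, bundled with its
coordinate functionals. -/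
noncomputable def toSchauderBasis (he : IsSchauderBasis e) : SchauderBasis ℝ X where
  basis := e
  coord i := ⟨LinearMap.proj i ∘ₗ he.coord, he.continuous_coord i⟩
  ortho i j := (congrFun (he.coord_basis j) i).trans <| by
    simp only [Pi.single_apply]
    congr
  expansion x := by
    rw [HasSum, SummationFilter.conditional_filter_eq_map_range, tendsto_map'_iff]
    exact he.tendsto_sum_coord x

end IsSchauderBasis

section IntervalProjections

variable {𝕜 X : Type*} [NontriviallyNormedField 𝕜] [NormedAddCommGroup X] [NormedSpace 𝕜 X]

theorem proj_sum_smul {β ι : Type*} [DecidableEq β] {L : SummationFilter β}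
    (b : GeneralSchauderBasis β 𝕜 X L) (A : Finset β) (s : Finset ι) (a : ι → 𝕜) (φ : ι → β) :
    b.proj A (∑ i ∈ s, a i • b (φ i)) = ∑ i ∈ s with φ i ∈ A, a i • b (φ i) := by
  rw [map_sum, sum_filter]
  refine sum_congr rfl fun i _ ↦ ?_
  rw [map_smul, b.proj_apply_basis_mem, smul_ite, smul_zero]
  congr

theorem proj_Ico_eq_sub (b : SchauderBasis 𝕜 X) {p q : ℕ} (hpq : p ≤ q) :
    GeneralSchauderBasis.proj b (Ico p q) = b.proj q - b.proj p := by
  ext x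
  simp only [GeneralSchauderBasis.proj_apply, SchauderBasis.proj_apply,
    sub_apply, sum_Ico_eq_sub _ hpq]

theorem exists_norm_proj_Ico_le [CompleteSpace X] (b : SchauderBasis 𝕜 X) :
    ∃ C, ∀ p q, ‖GeneralSchauderBasis.proj b (Ico p q)‖ ≤ C := by
  obtain ⟨C, hC⟩ := b.exists_norm_proj_le
  have hC0 : 0 ≤ C := (norm_nonneg _).trans (hC 0)
  refine ⟨C + C, fun p q ↦ ?_⟩
  obtain hpq | hqp := le_total p q
  · rw [proj_Ico_eq_sub b hpq]
    exact (norm_sub_le _ _).trans (add_le_add (hC q) (hC p))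
  · rw [Ico_eq_empty_of_le hqp, GeneralSchauderBasis.proj_empty, norm_zero]
    positivity

end IntervalProjections

section WeaklyUnconditionallyCauchy

variable {ι X : Type*} [NormedAddCommGroup X] [NormedSpace ℝ X] {z : ι → X} {K : ℝ}

theorem sum_abs_le_two_nsmul {α : Type*} [AddCommGroup α] [LinearOrder α] [IsOrderedAddMonoid α]
    {r : ι → α} {K : α} (hr : ∀ F : Finset ι, |∑ k ∈ F, r k| ≤ K) (F : Finset ι) :
    ∑ k ∈ F, |r k| ≤ 2 • K := by
  have hpos : ∑ k ∈ F with 0 ≤ r k, |r k| ≤ K := calc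
    ∑ k ∈ F with 0 ≤ r k, |r k| = ∑ k ∈ F with 0 ≤ r k, r k :=
      sum_congr rfl fun k hk ↦ abs_of_nonneg (mem_filter.1 hk).2
    _ ≤ K := (le_abs_self _).trans (hr _)
  have hneg : ∑ k ∈ F with ¬0 ≤ r k, |r k| ≤ K := calc
    ∑ k ∈ F with ¬0 ≤ r k, |r k| = -∑ k ∈ F with ¬0 ≤ r k, r k := by
      rw [← sum_neg_distrib]
      exact sum_congr rfl fun k hk ↦ abs_of_neg (not_le.1 (mem_filter.1 hk).2)
    _ ≤ K := (neg_le_abs _).trans (hr _)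
  rw [← sum_filter_add_sum_filter_not F (fun k ↦ 0 ≤ r k), two_nsmul]
  exact add_le_add hpos hneg

theorem sum_abs_apply_le (hz : ∀ F : Finset ι, ‖∑ k ∈ F, z k‖ ≤ K) (f : StrongDual ℝ X)
    (F : Finset ι) : ∑ k ∈ F, |f (z k)| ≤ 2 * (‖f‖ * K) := by
  have hf (G : Finset ι) : |∑ k ∈ G, f (z k)| ≤ ‖f‖ * K := by
    rw [← map_sum, ← Real.norm_eq_abs]
    exact f.le_opNorm_of_le (hz G)
  simpa only [nsmul_eq_mul, Nat.cast_ofNat] using sum_abs_le_two_nsmul hf F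

theorem tendsto_apply_zero_of_norm_sum_le (hz : ∀ F : Finset ι, ‖∑ k ∈ F, z k‖ ≤ K)
    (f : StrongDual ℝ X) : Tendsto (fun k ↦ f (z k)) cofinite (𝓝 0) := by
  have hsummable : Summable fun k ↦ |f (z k)| :=
    summable_of_sum_le (fun _ ↦ abs_nonneg _) (sum_abs_apply_le hz f)
  exact (tendsto_zero_iff_abs_tendsto_zero _).2 hsummable.tendsto_cofinite_zero

theorem norm_sum_smul_le (hz : ∀ F : Finset ι, ‖∑ k ∈ F, z k‖ ≤ K) {F : Finset ι} {b : ι → ℝ}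
    {B : ℝ} (hB : 0 ≤ B) (hb : ∀ k ∈ F, |b k| ≤ B) : ‖∑ k ∈ F, b k • z k‖ ≤ B * (2 * K) := by
  have hK : 0 ≤ K := (norm_nonneg _).trans (hz ∅)
  obtain ⟨f, hf, hfsum⟩ := exists_dual_vector'' ℝ (∑ k ∈ F, b k • z k)
  calc ‖∑ k ∈ F, b k • z k‖ = ∑ k ∈ F, b k * f (z k) := by
        simpa only [map_sum, map_smul, smul_eq_mul, RCLike.ofReal_real_eq_id, id] using hfsum.symm
    _ ≤ ∑ k ∈ F, B * |f (z k)| := by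
        refine sum_le_sum fun k hk ↦ (le_abs_self _).trans ?_
        rw [abs_mul]
        gcongr
        exact hb k hk
    _ ≤ B * (2 * (‖f‖ * K)) := by
        rw [← mul_sum]
        gcongr
        exact sum_abs_apply_le hz f F
    _ ≤ B * (2 * K) := by
        gcongr
        exact mul_le_of_le_one_left hK hf

theorem summable_smul_of_tendsto_zero [CompleteSpace X] (hz : ∀ F : Finset ι, ‖∑ k ∈ F, z k‖ ≤ K)
    {b : ι → ℝ} (hb : Tendsto b cofinite (𝓝 0)) : Summable fun k ↦ b k • z k := by
  have hK : 0 ≤ K := (norm_nonneg _).trans (hz ∅)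
  refine summable_iff_vanishing_norm.2 fun ε hε ↦ ?_
  obtain ⟨B, hB, hBε⟩ : ∃ B > 0, B * (2 * K) < ε :=
    ⟨ε / (2 * K + 1), by positivity, by rw [div_mul_eq_mul_div, div_lt_iff₀] <;> nlinarith⟩
  have hfin : {k | ¬|b k| ≤ B}.Finite := hb.abs.eventually_le_const (by simpa using hB)
  refine ⟨hfin.toFinset, fun F hF ↦ (norm_sum_smul_le hz hB.le fun k hk ↦ ?_).trans_lt hBε⟩
  by_contra hkB
  exact disjoint_left.1 hF hk (hfin.mem_toFinset.2 hkB)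

end WeaklyUnconditionallyCauchy

section SpaceC0

theorem tendsto_cofinite_spaceC0 (b : spaceC0) : Tendsto b cofinite (𝓝 0) :=
  cocompact_eq_cofinite ℕ ▸ b.zero_at_infty'

theorem norm_spaceC0_le_iff {b : spaceC0} {B : ℝ} (hB : 0 ≤ B) : ‖b‖ ≤ B ↔ ∀ k, |b k| ≤ B :=
  BoundedContinuousFunction.norm_le (f := b.toBCF) hB

theorem abs_apply_le_norm_spaceC0 (b : spaceC0) (k : ℕ) : |b k| ≤ ‖b‖ :=
  (norm_spaceC0_le_iff (norm_nonneg b)).1 le_rfl k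

/-- The `n`-th unit vector of `c₀`. -/
noncomputable def unitC0 (n : ℕ) : spaceC0 where
  toFun i := if i = n then 1 else 0
  continuous_toFun := continuous_of_discreteTopology
  zero_at_infty' := by
    rw [cocompact_eq_cofinite]
    refine tendsto_const_nhds.congr' ?_
    filter_upwards [(Set.finite_singleton n).compl_mem_cofinite] with i hi
    exact (if_neg hi).symm

theorem unitC0_apply (n i : ℕ) : unitC0 n i = if i = n then 1 else 0 := rfl

theorem sum_unitC0_apply (F : Finset ℕ) (i : ℕ) :
    (∑ n ∈ F, unitC0 n) i = if i ∈ F then 1 else 0 := calc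
  (∑ n ∈ F, unitC0 n) i = ∑ n ∈ F, unitC0 n i :=
    map_sum (⟨⟨fun f ↦ f i, rfl⟩, fun _ _ ↦ rfl⟩ : spaceC0 →+ ℝ) unitC0 F
  _ = if i ∈ F then 1 else 0 := by simp only [unitC0_apply, sum_ite_eq]

theorem norm_sum_unitC0_le_one (F : Finset ℕ) : ‖∑ n ∈ F, unitC0 n‖ ≤ 1 := by
  refine (norm_spaceC0_le_iff zero_le_one).2 fun i ↦ ?_
  rw [sum_unitC0_apply]
  split_ifs <;> simp

theorem one_le_norm_unitC0 (n : ℕ) : 1 ≤ ‖unitC0 n‖ := by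
  simpa [unitC0_apply] using abs_apply_le_norm_spaceC0 (unitC0 n) n

end SpaceC0

section EmbeddingC0

variable {X : Type} [NormedAddCommGroup X] [NormedSpace ℝ X] {z : ℕ → X} {K δ : ℝ}

theorem embeds_spaceC0_of_le_norm_sum [CompleteSpace X] (hδ : 0 < δ)
    (hz : ∀ F : Finset ℕ, ‖∑ k ∈ F, z k‖ ≤ K)
    (hlower : ∀ (b : ℕ → ℝ) (F : Finset ℕ), ∀ k ∈ F, δ * |b k| ≤ ‖∑ j ∈ F, b j • z j‖) :
    Embeds spaceC0 X := by
  have hK : 0 ≤ K := (norm_nonneg _).trans (hz ∅)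
  have hsummable (b : spaceC0) : Summable fun k ↦ b k • z k :=
    summable_smul_of_tendsto_zero hz (tendsto_cofinite_spaceC0 b)
  let T : spaceC0 →ₗ[ℝ] X :=
    { toFun b := ∑' k, b k • z k
      map_add' b b' := by
        simpa only [← add_smul] using! (hsummable b).tsum_add (hsummable b')
      map_smul' r b := by
        simpa only [smul_smul] using! (hsummable b).tsum_const_smul r }
  refine ⟨T, δ, 2 * K + 1, hδ, by positivity, fun b ↦ ⟨?_, ?_⟩⟩
  · rw [← le_div_iff₀' hδ, norm_spaceC0_le_iff (by positivity)]
    refine fun k ↦ (le_div_iff₀' hδ).2 (ge_of_tendsto (hsummable b).hasSum.norm ?_)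
    filter_upwards [eventually_ge_atTop {k}] with F hF
    exact hlower b F k (singleton_subset_iff.1 hF)
  · refine le_of_tendsto (hsummable b).hasSum.norm (Eventually.of_forall fun F ↦ ?_)
    calc ‖∑ k ∈ F, b k • z k‖ ≤ ‖b‖ * (2 * K) :=
          norm_sum_smul_le hz (norm_nonneg b) fun k _ ↦ abs_apply_le_norm_spaceC0 b k
      _ ≤ (2 * K + 1) * ‖b‖ := by linarith [norm_nonneg b]

theorem embeds_spaceC0_of_biorthogonal [CompleteSpace X] {C : ℝ} (hδ : 0 < δ)
    (hz : ∀ F : Finset ℕ, ‖∑ k ∈ F, z k‖ ≤ K) {Q : ℕ → X →L[ℝ] X} (hC : ∀ k, ‖Q k‖ ≤ C)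
    (hQ_ne : Pairwise fun k j ↦ Q k (z j) = 0) (hQ_self : ∀ k, δ ≤ ‖Q k (z k)‖) :
    Embeds spaceC0 X := by
  have hCpos : 0 < C := by
    have := hδ.trans_le <| (hQ_self 0).trans <| (Q 0).le_of_opNorm_le (hC 0) (z 0)
    exact pos_of_mul_pos_left this (norm_nonneg _)
  refine embeds_spaceC0_of_le_norm_sum (div_pos hδ hCpos) hz fun b F k hk ↦ ?_
  have hQsum : Q k (∑ j ∈ F, b j • z j) = b k • Q k (z k) := by
    rw [map_sum, sum_eq_single_of_mem k hk fun j _ hj ↦ by rw [map_smul, hQ_ne hj.symm, smul_zero],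
      map_smul]
  rw [div_mul_eq_mul_div, div_le_iff₀' hCpos]
  calc δ * |b k| ≤ ‖Q k (z k)‖ * |b k| := by gcongr; exact hQ_self k
    _ = ‖Q k (∑ j ∈ F, b j • z j)‖ := by rw [hQsum, norm_smul, mul_comm, Real.norm_eq_abs]
    _ ≤ C * ‖∑ j ∈ F, b j • z j‖ := (Q k).le_of_opNorm_le (hC k) _

end EmbeddingC0

section Blocks

theorem exists_strictMono_le_dist_of_not_cauchySeq {α : Type*} [PseudoMetricSpace α] {u : ℕ → α}
    (hu : ¬CauchySeq u) :
    ∃ ε > 0, ∃ n : ℕ → ℕ, StrictMono n ∧ ∀ k, ε ≤ dist (u (n (k + 1))) (u (n k)) := by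
  simp only [Metric.cauchySeq_iff', not_forall, not_exists, not_lt] at hu
  obtain ⟨ε, hε, hfar⟩ := hu
  choose nextFar hle hdist using hfar
  have hlt (N : ℕ) : N < nextFar N := by
    refine (hle N).lt_of_ne fun h ↦ ?_
    have := hdist N
    rw [← h, dist_self] at this
    exact this.not_gt hε
  refine ⟨ε, hε, fun k ↦ nextFar^[k] 0, strictMono_nat_of_lt_succ fun k ↦ ?_, fun k ↦ ?_⟩
  · simpa only [Function.iterate_succ_apply'] using hlt _
  · simpa only [Function.iterate_succ_apply'] using hdist _

/-- The index `k` of the block `Ico (n k) (n (k + 1))` that contains `i`, for a strictly increasing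
sequence `n`; the junk value is `0` for `i < n 0`. -/
def blockIndex (n : ℕ → ℕ) (i : ℕ) : ℕ := Nat.findGreatest (n · ≤ i) i

theorem blockIndex_eq {n : ℕ → ℕ} (hn : StrictMono n) {k i : ℕ} (hi : i ∈ Ico (n k) (n (k + 1))) :
    blockIndex n i = k := by
  rw [mem_Ico] at hi
  refine Nat.findGreatest_eq_iff.2 ⟨hn.le_apply.trans hi.1, fun _ ↦ hi.1, fun j hkj _ ↦ ?_⟩
  exact (hi.2.trans_le (hn.monotone hkj)).not_ge

theorem blockIndex_mono (n : ℕ → ℕ) : Monotone (blockIndex n) :=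
  fun _ _ hij ↦ Nat.findGreatest_mono (fun _ ↦ hij.trans') hij

theorem sum_Ico_blocks {M : Type*} [AddCommMonoid M] {n : ℕ → ℕ} (hn : Monotone n) (g : ℕ → M)
    (K : ℕ) :
    ∑ k ∈ range K, ∑ i ∈ Ico (n k) (n (k + 1)), g i = ∑ i ∈ Ico (n 0) (n K), g i := by
  induction K with
  | zero => simp
  | succ K ih => rw [sum_range_succ, ih, sum_Ico_consecutive g (hn K.zero_le) (hn K.le_succ)]

end Blocks

namespace IsOneSpreading

variable {X : Type} [NormedAddCommGroup X] [NormedSpace ℝ X] {e : ℕ → X}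

theorem norm_sum_comp (he : IsOneSpreading e) (s : Finset ℕ) (a : ℕ → ℝ) {φ : ℕ → ℕ}
    (hφ : StrictMono φ) : ‖∑ i ∈ s, a i • e (φ i)‖ = ‖∑ i ∈ s, a i • e i‖ := by
  obtain ⟨N, hN⟩ := s.exists_nat_subset_range
  have hextend (g : ℕ → X) :
      ∑ i ∈ range N, (if i ∈ s then a i else 0) • g i = ∑ i ∈ s, a i • g i := by
    simp only [ite_smul, zero_smul, sum_ite_mem, inter_eq_right.2 hN]
  simpa only [hextend] using he N (fun i ↦ if i ∈ s then a i else 0) φ hφ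

theorem norm_sum_blocks_shift (he : IsOneSpreading e) (a : ℕ → ℝ) {n s : ℕ → ℕ} (hn : StrictMono n)
    (hs : Monotone s) (K : ℕ) :
    ‖∑ k ∈ range K, ∑ i ∈ Ico (n k) (n (k + 1)), a i • e (i + s k)‖ =
      ‖∑ i ∈ Ico (n 0) (n K), a i • e i‖ := by
  have hφ : StrictMono fun i ↦ i + s (blockIndex n i) :=
    strictMono_id.add_monotone (hs.comp (blockIndex_mono n))
  rw [← he.norm_sum_comp _ a hφ, ← sum_Ico_blocks hn.monotone]
  congr! 4 with k - i hi
  rw [blockIndex_eq hn hi]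

end IsOneSpreading

section ShiftDifference

variable {X : Type} [NormedAddCommGroup X] [NormedSpace ℝ X] {e : ℕ → X} {a : ℕ → ℝ} {n : ℕ → ℕ}

/-- The block `∑ i ∈ Ico (n k) (n (k + 1)), a i • e i` shifted to the right by `n k` minus the same
block shifted by `n (k + 1)`. Different `k` use disjoint ranges of indices. -/
def shiftDifference (e : ℕ → X) (a : ℕ → ℝ) (n : ℕ → ℕ) (k : ℕ) : X :=
  ∑ i ∈ Ico (n k) (n (k + 1)), a i • e (i + n k) -
    ∑ i ∈ Ico (n k) (n (k + 1)), a i • e (i + n (k + 1))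

theorem sum_shiftDifference {F : Finset ℕ} {K : ℕ} (hF : F ⊆ range K) :
    ∑ k ∈ F, shiftDifference e a n k =
      ∑ k ∈ range K, ∑ i ∈ Ico (n k) (n (k + 1)), a i • e (i + n k) -
        ∑ k ∈ range K, ∑ i ∈ Ico (n k) (n (k + 1)),
          a i • e (i + if k ∈ F then n (k + 1) else n k) := by
  rw [← sum_sub_distrib]
  refine sum_subset_zero_on_sdiff hF (fun k hk ↦ ?_) fun k hk ↦ ?_
  · simp only [(mem_sdiff.1 hk).2, if_false, sub_self]
  · simp only [hk, if_true, shiftDifference]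

theorem norm_sum_shiftDifference_le (he : IsOneSpreading e) (hn : StrictMono n) {M : ℝ}
    (hM : ∀ K, ‖∑ i ∈ Ico (n 0) (n K), a i • e i‖ ≤ M) (F : Finset ℕ) :
    ‖∑ k ∈ F, shiftDifference e a n k‖ ≤ 2 * M := by
  obtain ⟨K, hK⟩ := F.exists_nat_subset_range
  have hshift : Monotone fun k ↦ if k ∈ F then n (k + 1) else n k := by
    refine monotone_nat_of_le_succ fun k ↦ ?_
    have h₁ := hn k.lt_succ_self
    have h₂ := hn (k + 1).lt_succ_self
    grind
  calc ‖∑ k ∈ F, shiftDifference e a n k‖ ≤ M + M := by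
        rw [sum_shiftDifference hK]
        refine (norm_sub_le _ _).trans (add_le_add ?_ ?_)
        · exact (he.norm_sum_blocks_shift a hn hn.monotone K).trans_le (hM K)
        · exact (he.norm_sum_blocks_shift a hn hshift K).trans_le (hM K)
    _ = 2 * M := (two_mul M).symm

theorem proj_shiftDifference_self (b : SchauderBasis ℝ X) (a : ℕ → ℝ) (n : ℕ → ℕ) (k : ℕ) :
    GeneralSchauderBasis.proj b (Ico (2 * n k) (n k + n (k + 1))) (shiftDifference b a n k) =
      ∑ i ∈ Ico (n k) (n (k + 1)), a i • b (i + n k) := by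
  rw [shiftDifference, map_sub, proj_sum_smul, proj_sum_smul, filter_true_of_mem,
    filter_false_of_mem, sum_empty, sub_zero]
  all_goals simp only [mem_Ico]; omega

theorem proj_shiftDifference_of_ne (b : SchauderBasis ℝ X) (a : ℕ → ℝ) (hn : Monotone n)
    {j k : ℕ} (hjk : j ≠ k) :
    GeneralSchauderBasis.proj b (Ico (2 * n k) (n k + n (k + 1))) (shiftDifference b a n j) =
      0 := by
  have hseparated : n (j + 1) ≤ n k ∨ n (k + 1) ≤ n j :=
    hjk.lt_or_gt.imp (fun h ↦ hn h) fun h ↦ hn h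
  have := hn j.le_succ
  have := hn k.le_succ
  rw [shiftDifference, map_sub, proj_sum_smul, proj_sum_smul, filter_false_of_mem,
    filter_false_of_mem, sum_empty, sum_empty, sub_zero]
  all_goals simp only [mem_Ico]; omega

theorem embeds_spaceC0_of_not_boundedlyComplete [CompleteSpace X] (hbasis : IsSchauderBasis e)
    (hspread : IsOneSpreading e) (hbc : ¬BoundedlyComplete e) : Embeds spaceC0 X := by
  simp only [BoundedlyComplete, not_forall] at hbc
  obtain ⟨a, ⟨M, hM⟩, hdiverges⟩ := hbc
  obtain ⟨δ, hδ, n, hn, hfar⟩ := exists_strictMono_le_dist_of_not_cauchySeq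
    fun h ↦ hdiverges (cauchySeq_tendsto_of_complete h)
  have hbdd (K : ℕ) : ‖∑ i ∈ Ico (n 0) (n K), a i • e i‖ ≤ M + M := by
    rw [sum_Ico_eq_sub _ (hn.monotone K.zero_le)]
    exact (norm_sub_le _ _).trans (add_le_add (hM _) (hM _))
  obtain ⟨C, hC⟩ := exists_norm_proj_Ico_le hbasis.toSchauderBasis
  refine embeds_spaceC0_of_biorthogonal hδ (norm_sum_shiftDifference_le hspread hn hbdd)
    (fun k ↦ hC (2 * n k) (n k + n (k + 1)))
    (fun k j hkj ↦ proj_shiftDifference_of_ne hbasis.toSchauderBasis a hn.monotone hkj.symm)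
    fun k ↦ ?_
  calc δ ≤ ‖∑ i ∈ Ico (n k) (n (k + 1)), a i • e i‖ := by
        rw [sum_Ico_eq_sub _ (hn.monotone k.le_succ), ← dist_eq_norm]
        exact hfar k
    _ = ‖∑ i ∈ Ico (n k) (n (k + 1)), a i • e (i + n k)‖ :=
        (hspread.norm_sum_comp _ a (add_left_strictMono (a := n k))).symm
    _ = _ := congrArg norm (proj_shiftDifference_self hbasis.toSchauderBasis a n k).symm

end ShiftDifference

section GlidingHump

variable {𝕜 X : Type*} [NontriviallyNormedField 𝕜] [NormedAddCommGroup X] [NormedSpace 𝕜 X]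

theorem exists_norm_sub_proj_Ico_lt (b : SchauderBasis 𝕜 X) {x : ℕ → X}
    (hx : ∀ i, Tendsto (fun n ↦ b.coord i (x n)) atTop (𝓝 0)) {ε : ℝ} (hε : 0 < ε) (N p : ℕ) :
    ∃ n > N, ∃ q > p, ‖x n - GeneralSchauderBasis.proj b (Ico p q) (x n)‖ < ε := by
  have hhead : Tendsto (fun n ↦ b.proj p (x n)) atTop (𝓝 0) := by
    simpa using tendsto_finsetSum (range p) fun i _ ↦ (hx i).smul_const (b i)
  obtain ⟨n, hn, hNn⟩ := ((hhead.norm.eventually_lt_const (norm_zero.trans_lt (half_pos hε))).and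
    (eventually_gt_atTop N)).exists
  have htail : Tendsto (fun q ↦ ‖x n - b.proj q (x n)‖) atTop (𝓝 0) := by
    simpa using ((tendsto_const_nhds (x := x n)).sub (b.tendsto_proj (x n))).norm
  obtain ⟨q, hq, hpq⟩ := ((htail.eventually_lt_const (half_pos hε)).and
    (eventually_gt_atTop p)).exists
  refine ⟨n, hNn, q, hpq, ?_⟩
  rw [proj_Ico_eq_sub b hpq.le]
  calc ‖x n - (b.proj q - b.proj p) (x n)‖ = ‖x n - b.proj q (x n) + b.proj p (x n)‖ := by
        rw [sub_apply, sub_sub_eq_add_sub, sub_add_eq_add_sub]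
    _ ≤ ‖x n - b.proj q (x n)‖ + ‖b.proj p (x n)‖ := norm_add_le _ _
    _ < ε := by linarith

theorem exists_strictMono_norm_sub_proj_Ico_lt (b : SchauderBasis 𝕜 X) {x : ℕ → X}
    (hx : ∀ i, Tendsto (fun n ↦ b.coord i (x n)) atTop (𝓝 0)) {ε : ℕ → ℝ} (hε : ∀ k, 0 < ε k) :
    ∃ n m : ℕ → ℕ, StrictMono n ∧ StrictMono m ∧ m 0 = 0 ∧
      ∀ k, ‖x (n k) - GeneralSchauderBasis.proj b (Ico (m k) (m (k + 1))) (x (n k))‖ < ε k := by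
  choose nextIndex hIndex nextEnd hEnd hclose using
    fun (k : ℕ) (s : ℕ × ℕ) ↦ exists_norm_sub_proj_Ico_lt b hx (hε k) s.1 s.2
  let s : ℕ → ℕ × ℕ := Nat.rec (0, 0) fun k t ↦ (nextIndex k t, nextEnd k t)
  refine ⟨fun k ↦ (s (k + 1)).1, fun k ↦ (s k).2, ?_, ?_, rfl, fun k ↦ hclose k (s k)⟩
  · exact strictMono_nat_of_lt_succ fun k ↦ hIndex (k + 1) (s (k + 1))
  · exact strictMono_nat_of_lt_succ fun k ↦ hEnd k (s k)

end GlidingHump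

section BoundedlyComplete

variable {X : Type} [NormedAddCommGroup X] [NormedSpace ℝ X] [CompleteSpace X]
  {b : SchauderBasis ℝ X}

theorem BoundedlyComplete.tendsto_sum_Ico_blocks (hb : BoundedlyComplete b) {a : ℕ → ℝ} {m : ℕ → ℕ}
    (hm : StrictMono m) {M : ℝ} (hM : ∀ k, ‖∑ i ∈ range (m k), a i • b i‖ ≤ M) :
    Tendsto (fun k ↦ ∑ i ∈ Ico (m k) (m (k + 1)), a i • b i) atTop (𝓝 0) := by
  obtain ⟨C, hC⟩ := b.exists_norm_proj_le
  have hproj (N : ℕ) : b.proj N (∑ i ∈ range (m N), a i • b i) = ∑ i ∈ range N, a i • b i := by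
    rw [SchauderBasis.proj, proj_sum_smul b (range N) (range (m N)) a fun i ↦ i,
      filter_mem_eq_inter, inter_eq_right.2 (range_subset_range.2 hm.le_apply)]
  obtain ⟨x, hx⟩ := hb a ⟨C * M, fun N ↦ hproj N ▸ (b.proj N).le_of_opNorm_le_of_le (hC N) (hM N)⟩
  have hx_blocks := hx.comp hm.tendsto_atTop
  simpa only [Function.comp_apply, sum_Ico_eq_sub _ (hm.monotone (Nat.le_succ _)), sub_self] using!
    ((tendsto_add_atTop_iff_nat 1).2 hx_blocks).sub hx_blocks

theorem BoundedlyComplete.exists_strictMono_tendsto_zero (hb : BoundedlyComplete b) {x : ℕ → X}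
    {K : ℝ} (hx : ∀ F : Finset ℕ, ‖∑ k ∈ F, x k‖ ≤ K) :
    ∃ n : ℕ → ℕ, StrictMono n ∧ Tendsto (x ∘ n) atTop (𝓝 0) := by
  obtain ⟨n, m, hn, hm, hm0, hclose⟩ := exists_strictMono_norm_sub_proj_Ico_lt b
    (fun i ↦ Nat.cofinite_eq_atTop ▸ tendsto_apply_zero_of_norm_sum_le hx (b.coord i))
    (ε := fun k ↦ (1 / 2) ^ k) fun k ↦ by positivity
  set y : ℕ → X := fun k ↦ GeneralSchauderBasis.proj b (Ico (m k) (m (k + 1))) (x (n k))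
  let a (i : ℕ) : ℝ := b.coord i (x (n (blockIndex m i)))
  have hblock (k : ℕ) : ∑ i ∈ Ico (m k) (m (k + 1)), a i • b i = y k := by
    simp only [y, GeneralSchauderBasis.proj_apply]
    exact sum_congr rfl fun i hi ↦ by simp only [a, blockIndex_eq hm hi]
  have hbdd (N : ℕ) : ‖∑ i ∈ range (m N), a i • b i‖ ≤ K + 2 := calc
    ‖∑ i ∈ range (m N), a i • b i‖ = ‖∑ k ∈ range N, y k‖ := by
      rw [range_eq_Ico, ← hm0, ← sum_Ico_blocks hm.monotone]
      simp only [hblock]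
    _ = ‖∑ k ∈ (range N).map ⟨n, hn.injective⟩, x k - ∑ k ∈ range N, (x (n k) - y k)‖ := by
      simp
    _ ≤ K + ∑ k ∈ range N, (1 / 2 : ℝ) ^ k :=
      (norm_sub_le _ _).trans (add_le_add (hx _) (norm_sum_le_of_le _ fun k _ ↦ (hclose k).le))
    _ ≤ K + 2 := by gcongr; exact sum_geometric_two_le N
  have hy_zero : Tendsto y atTop (𝓝 0) := by
    simpa only [hblock] using hb.tendsto_sum_Ico_blocks hm hbdd
  have hclose_zero : Tendsto (fun k ↦ x (n k) - y k) atTop (𝓝 0) :=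
    squeeze_zero_norm (fun k ↦ (hclose k).le)
      (tendsto_pow_atTop_nhds_zero_of_lt_one (by norm_num) (by norm_num))
  exact ⟨n, hn, by simpa [Function.comp_def] using hclose_zero.add hy_zero⟩

theorem BoundedlyComplete.not_embeds_spaceC0 (hb : BoundedlyComplete b) : ¬Embeds spaceC0 X := by
  rintro ⟨T, c, C, hc, hC, hT⟩
  have hbdd (F : Finset ℕ) : ‖∑ k ∈ F, T (unitC0 k)‖ ≤ C := by
    rw [← map_sum]
    exact (hT _).2.trans (mul_le_of_le_one_right hC.le (norm_sum_unitC0_le_one F))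
  obtain ⟨n, -, hn⟩ := hb.exists_strictMono_tendsto_zero hbdd
  have hlower (k : ℕ) : c ≤ ‖T (unitC0 (n k))‖ :=
    (le_mul_of_one_le_right hc.le (one_le_norm_unitC0 _)).trans (hT _).1
  exact hc.not_ge (by simpa using ge_of_tendsto' hn.norm hlower)

end BoundedlyComplete

theorem boundedly_complete_iff_no_c0_general
    {X : Type} [NormedAddCommGroup X] [NormedSpace ℝ X] [CompleteSpace X]
    (e : ℕ → X) (hbasis : IsSchauderBasis e) (hspread : IsOneSpreading e) :
    BoundedlyComplete e ↔ ¬ Embeds spaceC0 X :=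
  ⟨fun hbc ↦ hbc.not_embeds_spaceC0 (b := hbasis.toSchauderBasis),
    not_imp_comm.1 (embeds_spaceC0_of_not_boundedlyComplete hbasis hspread)⟩

theorem boundedly_complete_iff_no_c0
    {X : Type} [NormedAddCommGroup X] [NormedSpace ℝ X] [CompleteSpace X]
    (e : ℕ → X) (hnorm : ∀ i, ‖e i‖ = 1) (hbasis : IsSchauderBasis e)
    (hspread : IsOneSpreading e) (hbi : IsBimonotone e) (hnwn : ¬ WeaklyNull e) :
    BoundedlyComplete e ↔ ¬ Embeds spaceC0 X :=
  boundedly_complete_iff_no_c0_general e hbasis hspread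
end

section
/- Let (x_i) be a normalized weakly null Schauder basis for a Banach space X. Assume that ℓ1 does not embed into X and that whenever (y_i) is a normalized weakly null block basis of (x_i) having a spreading model (e_i), then ‖e_1 − e_2‖ = 1. Then some subsequence of (x_i) is equivalent to the unit vector basis of c0. -/
open Filter Finset Topology NormedSpace
open scoped NNReal

/-- `x` is a block basis of `e`: each `x j` is a nonzero vector finitely supported on an
interval of indices, with successive supports strictly increasing. -/
def IsBlockBasis {X : Type} [NormedAddCommGroup X] [NormedSpace ℝ X]
    (e : ℕ → X) (x : ℕ → X) : Prop :=
  ∃ (a : ℕ → ℕ → ℝ) (p q : ℕ → ℕ),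
    (∀ j, x j = ∑ i ∈ Finset.Icc (p j) (q j), a j i • e i) ∧
    (∀ j, x j ≠ 0) ∧ (∀ j, p j ≤ q j) ∧ (∀ j, q j < p (j + 1))

/-- The space `ℓ¹`. -/
noncomputable abbrev ellOne : Type := lp (fun _ : ℕ => ℝ) 1

/-- The sequence `x` is equivalent to the unit vector basis of `c₀`. -/
def EquivC0Basis {X : Type} [NormedAddCommGroup X] [NormedSpace ℝ X] (x : ℕ → X) : Prop :=
  ∃ C : ℝ, 1 ≤ C ∧ ∀ (k : ℕ) (a : ℕ → ℝ),
    C⁻¹ * (((Finset.range k).sup fun i => ‖a i‖₊ : ℝ≥0) : ℝ) ≤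
        ‖∑ i ∈ Finset.range k, a i • x i‖ ∧
    ‖∑ i ∈ Finset.range k, a i • x i‖ ≤
      C * (((Finset.range k).sup fun i => ‖a i‖₊ : ℝ≥0) : ℝ)

/-- `e` (in a Banach space `E`) is a spreading model of the sequence `y`. -/
def IsSpreadingModel {X E : Type} [NormedAddCommGroup X] [NormedSpace ℝ X]
    [NormedAddCommGroup E] [NormedSpace ℝ E] (y : ℕ → X) (e : ℕ → E) : Prop :=
  ∃ ε : ℕ → ℝ, Antitone ε ∧ Tendsto ε atTop (𝓝 (0 : ℝ)) ∧
    ∀ (n : ℕ) (a : ℕ → ℝ), (∀ i < n, |a i| ≤ 1) →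
      ∀ k : ℕ → ℕ, StrictMono k → n ≤ k 0 →
        |‖∑ i ∈ Finset.range n, a i • y (k i)‖ - ‖∑ i ∈ Finset.range n, a i • e i‖| ≤ ε n

/-!
Passing to subsequences in the sense of infinite Ramsey theory, one may assume that the sums
`∑ i ∈ s, x i` are almost monotone under adding later indices. If every subsequence contained sums
of norm greater than `2`, the maximal index sets `s` with `‖∑ i ∈ s, x i‖ ≤ R` would form blocks;
since `ℓ¹` does not embed, sequences of these blocks are weakly null on a subsequence, and the
spreading model hypothesis then provides two blocks whose sum has norm barely more than `R`. By
homogeneity this holds for all successive pairs of blocks, so a block can be put in front of any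
later set at a small cost in the bound. Stacking blocks with the bounds `1 + 1 / (n + 1)` shows that
all sums have norm at most `2` after all. Uniformly bounded sums over subsets give the upper
`c₀`-estimate, and almost monotonicity gives the lower one.
-/

/-! ### Infinite Ramsey theory -/

section InitialSegments

variable {α : Type*} [LinearOrder α]

/-- The finite set `s` is an initial segment of `P`. -/
def IsInitSeg (s : Finset α) (P : Set α) : Prop :=
  ↑s ⊆ P ∧ ∀ a ∈ P, ∀ b ∈ s, a ≤ b → a ∈ s

variable {s t u w : Finset α} {P Q : Set α} {a : α}

theorem IsInitSeg.refl (s : Finset α) : IsInitSeg s ↑s :=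
  ⟨subset_rfl, fun _ ha _ _ _ => ha⟩

theorem isInitSeg_empty (P : Set α) : IsInitSeg ∅ P := by
  simp [IsInitSeg]

theorem IsInitSeg.trans (hst : IsInitSeg s ↑t) (ht : IsInitSeg t P) : IsInitSeg s P :=
  ⟨hst.1.trans ht.1, fun a ha b hb hab => hst.2 a (ht.2 a ha b (hst.1 hb) hab) b hb hab⟩

theorem IsInitSeg.mono (hs : IsInitSeg s P) (hsQ : ↑s ⊆ Q) (hQP : Q ⊆ P) : IsInitSeg s Q :=
  ⟨hsQ, fun a ha => hs.2 a (hQP ha)⟩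

theorem isInitSeg_or_isInitSeg (hst : ∀ a ∈ s, ∀ b ∈ t, a ≤ b → a ∈ t)
    (hts : ∀ a ∈ t, ∀ b ∈ s, a ≤ b → a ∈ s) : IsInitSeg s ↑t ∨ IsInitSeg t ↑s := by
  by_cases h : s ⊆ t
  · exact Or.inl ⟨h, hts⟩
  · obtain ⟨a, has, hat⟩ := Finset.not_subset.1 h
    exact Or.inr
      ⟨fun b hb => hts b hb a has (le_of_not_ge fun hab => hat (hst a has b hb hab)), hst⟩

theorem IsInitSeg.total (hs : IsInitSeg s P) (ht : IsInitSeg t P) :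
    IsInitSeg s ↑t ∨ IsInitSeg t ↑s :=
  isInitSeg_or_isInitSeg (fun a ha => ht.2 a (hs.1 ha)) fun a ha => hs.2 a (ht.1 ha)

theorem isInitSeg_union_of_lt (h : ∀ b ∈ s, ∀ a ∈ P, b < a) : IsInitSeg s (↑s ∪ P) :=
  ⟨Set.subset_union_left, fun a ha b hb hab =>
    ha.resolve_right fun haP => hab.not_gt (h b hb a haP)⟩

theorem isInitSeg_insert (h : ∀ b ∈ u, b < a) : IsInitSeg u ↑(insert a u) := by
  rw [Finset.coe_insert, Set.insert_eq, Set.union_comm]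
  exact isInitSeg_union_of_lt (by simpa using h)

theorem IsInitSeg.eq_insert_or (hs : IsInitSeg s ↑(insert a u)) (h : ∀ b ∈ u, b < a) :
    s = insert a u ∨ IsInitSeg s ↑u := by
  by_cases ha : a ∈ s
  · refine Or.inl (Finset.Subset.antisymm (by exact_mod_cast hs.1) fun b hb => ?_)
    refine hs.2 b hb a ha ?_
    rcases Finset.mem_insert.1 hb with rfl | hb
    exacts [le_rfl, (h b hb).le]
  · refine Or.inr (hs.mono (fun b hb => ?_) (by simp))
    exact (Finset.mem_insert.1 (hs.1 hb)).resolve_left fun hba => ha (hba ▸ hb)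

theorem IsInitSeg.exists_insert [WellFoundedLT α] (hs : IsInitSeg s P) (hP : ¬ P ⊆ ↑s) :
    ∃ a ∈ P, (∀ b ∈ s, b < a) ∧ IsInitSeg (insert a s) P := by
  have hne : (P \ ↑s).Nonempty := Set.sdiff_nonempty.2 hP
  set a := wellFounded_lt.min (P \ ↑s) hne
  have ha : a ∈ P \ ↑s := wellFounded_lt.min_mem _ hne
  refine ⟨a, ha.1, fun b hb => lt_of_not_ge fun hab => ha.2 (hs.2 a ha.1 b hb hab), ?_, ?_⟩
  · rw [Finset.coe_insert]
    exact Set.insert_subset ha.1 hs.1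
  · intro p hp b hb hpb
    by_contra hps
    rw [Finset.mem_insert, not_or] at hps
    rcases Finset.mem_insert.1 hb with rfl | hb
    · exact wellFounded_lt.not_lt_min (P \ ↑s) (x := p) ⟨hp, hps.2⟩ (hpb.lt_of_ne hps.1)
    · exact hps.2 (hs.2 p hp b hb hpb)

theorem IsInitSeg.union_left (h : IsInitSeg w ↑t) (hst : ∀ a ∈ s, ∀ b ∈ t, a < b) :
    IsInitSeg (s ∪ w) ↑(s ∪ t) := by
  refine ⟨by exact_mod_cast Finset.union_subset_union_right h.1, fun a ha b hb hab => ?_⟩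
  rcases Finset.mem_union.1 ha with ha | ha
  · exact Finset.mem_union_left _ ha
  · rcases Finset.mem_union.1 hb with hb | hb
    · exact absurd (hst b hb a ha) hab.not_gt
    · exact Finset.mem_union_right _ (h.2 a ha b hb hab)

end InitialSegments

section Fusion

variable {M N L P : Set ℕ} {u : Finset ℕ}

/-- The elements of `N` lying strictly above every element of `u`. -/
def tailAbove (N : Set ℕ) (u : Finset ℕ) : Set ℕ := {a ∈ N | ∀ i ∈ u, i < a}

theorem tailAbove_subset (N : Set ℕ) (u : Finset ℕ) : tailAbove N u ⊆ N := fun _ h => h.1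

theorem tailAbove_mono (h : L ⊆ N) (u : Finset ℕ) : tailAbove L u ⊆ tailAbove N u :=
  fun _ ha => ⟨h ha.1, ha.2⟩

@[simp]
theorem tailAbove_empty (N : Set ℕ) : tailAbove N ∅ = N := by
  simp [tailAbove]

@[simp]
theorem tailAbove_tailAbove (N : Set ℕ) (u : Finset ℕ) :
    tailAbove (tailAbove N u) u = tailAbove N u := by
  ext; simp +contextual [tailAbove]

theorem infinite_tailAbove (hN : N.Infinite) (u : Finset ℕ) : (tailAbove N u).Infinite :=
  (hN.sdiff (Set.finite_Iic (u.sup id))).mono fun _ ha =>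
    ⟨ha.1, fun _ hi => (Finset.le_sup (f := id) hi).trans_lt (not_le.1 ha.2)⟩

theorem insert_subset_of_mem_tailAbove (hu : ↑u ⊆ N) {a : ℕ} (ha : a ∈ tailAbove N u) :
    (↑(insert a u) : Set ℕ) ⊆ N := by
  rw [Finset.coe_insert]
  exact Set.insert_subset ha.1 hu

theorem exists_infinite_forall_mem_finset {ι α : Type*} {D : ι → Set α → Prop}
    (hD : ∀ i, Antitone (D i)) (I : Finset ι) {M : Set α} (hM : M.Infinite)
    (hex : ∀ i ∈ I, ∀ L ⊆ M, L.Infinite → ∃ L' ⊆ L, L'.Infinite ∧ D i L') :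
    ∃ L ⊆ M, L.Infinite ∧ ∀ i ∈ I, D i L := by
  classical
  induction I using Finset.induction_on with
  | empty => exact ⟨M, subset_rfl, hM, by simp⟩
  | insert i I _ ih =>
    obtain ⟨L, hLM, hL, hLD⟩ := ih fun j hj => hex j (Finset.mem_insert_of_mem hj)
    obtain ⟨L', hL'L, hL', hL'D⟩ := hex i (Finset.mem_insert_self i I) L hLM hL
    refine ⟨L', hL'L.trans hLM, hL', fun j hj => ?_⟩
    rcases Finset.mem_insert.1 hj with rfl | hj
    exacts [hL'D, hD j hL'L (hLD j hj)]

theorem exists_fusion_step {D : Finset ℕ → Set ℕ → Prop} (hD : ∀ u, Antitone (D u))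
    (hex : ∀ u : Finset ℕ, ↑u ⊆ M → ∀ L ⊆ M, L.Infinite → ∃ L' ⊆ L, L'.Infinite ∧ D u L')
    (hLM : L ⊆ M) (hL : L.Infinite) :
    ∃ L' ⊆ tailAbove L {sInf L}, L'.Infinite ∧
      ∀ u : Finset ℕ, ↑u ⊆ M → (∀ i ∈ u, i ≤ sInf L) → D u L' := by
  classical
  have hsub : tailAbove L {sInf L} ⊆ M := (tailAbove_subset _ _).trans hLM
  obtain ⟨L', hL'L, hL', hL'D⟩ := exists_infinite_forall_mem_finset hD
    ((Finset.Iic (sInf L)).powerset.filter fun u => ↑u ⊆ M) (infinite_tailAbove hL {sInf L})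
    fun u hu K hK => hex u (Finset.mem_filter.1 hu).2 K (hK.trans hsub)
  exact ⟨L', hL'L, hL', fun u huM hu => hL'D u (Finset.mem_filter.2
    ⟨Finset.mem_powerset.2 fun i hi => Finset.mem_Iic.2 (hu i hi), huM⟩)⟩

theorem exists_fusion {D : Finset ℕ → Set ℕ → Prop} (hD : ∀ u, Antitone (D u)) (hM : M.Infinite)
    (hex : ∀ u : Finset ℕ, ↑u ⊆ M → ∀ L ⊆ M, L.Infinite → ∃ L' ⊆ L, L'.Infinite ∧ D u L') :
    ∃ N ⊆ M, N.Infinite ∧ ∀ u : Finset ℕ, ↑u ⊆ N → D u (tailAbove N u) := by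
  obtain ⟨L₀, hL₀M, hL₀, hL₀D⟩ := hex ∅ (by simp) M subset_rfl hM
  choose g hgsub hginf hgD using fun L : {L : Set ℕ // L ⊆ M ∧ L.Infinite} =>
    exists_fusion_step hD hex L.2.1 L.2.2
  let next : {L : Set ℕ // L ⊆ M ∧ L.Infinite} → {L : Set ℕ // L ⊆ M ∧ L.Infinite} := fun L =>
    ⟨g L, ((hgsub L).trans (tailAbove_subset _ _)).trans L.2.1, hginf L⟩
  let A : ℕ → {L : Set ℕ // L ⊆ M ∧ L.Infinite} := fun n => next^[n] ⟨L₀, hL₀M, hL₀⟩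
  have hA (n : ℕ) : (A (n + 1)).1 = g (A n) := by
    simp only [A, Function.iterate_succ_apply', next]
  let c : ℕ → ℕ := fun n => sInf (A n).1
  have hcA (n : ℕ) : c n ∈ (A n).1 := Nat.sInf_mem (A n).2.2.nonempty
  have hAanti : Antitone fun n => (A n).1 := antitone_nat_of_succ_le fun n => by
    rw [hA]
    exact (hgsub _).trans (tailAbove_subset _ _)
  have hc : StrictMono c := strictMono_nat_of_lt_succ fun n => by
    have hmem := hcA (n + 1)
    rw [hA] at hmem
    exact (hgsub _ hmem).2 _ (Finset.mem_singleton_self _)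
  refine ⟨Set.range c, ?_, Set.infinite_range_of_injective hc.injective, fun u hu => ?_⟩
  · rintro _ ⟨n, rfl⟩
    exact (A n).2.1 (hcA n)
  rcases u.eq_empty_or_nonempty with rfl | hne
  · refine hD ∅ ?_ hL₀D
    rintro _ ⟨⟨n, rfl⟩, -⟩
    exact hAanti (Nat.zero_le n) (hcA n)
  · obtain ⟨n, hn⟩ := hu (Finset.max'_mem u hne)
    have huM : ↑u ⊆ M := fun i hi => by
      obtain ⟨m, rfl⟩ := hu hi
      exact (A m).2.1 (hcA m)
    refine hD u ?_ (hgD (A n) u huM fun i hi =>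
      (Finset.le_max' u i hi).trans hn.ge)
    rintro _ ⟨⟨m, rfl⟩, hm⟩
    have hnm : n < m := hc.lt_iff_lt.1 (hn ▸ hm _ (Finset.max'_mem u hne))
    exact hA n ▸ hAanti (Nat.succ_le_of_lt hnm) (hcA m)

theorem exists_infinite_homogeneous_insert (p : Finset ℕ → Prop) (hM : M.Infinite) :
    ∃ N ⊆ M, N.Infinite ∧ ∀ u : Finset ℕ, ↑u ⊆ N →
      (∀ a ∈ tailAbove N u, p (insert a u)) ∨ ∀ a ∈ tailAbove N u, ¬ p (insert a u) := by
  refine exists_fusion (D := fun u L => (∀ a ∈ L, p (insert a u)) ∨ ∀ a ∈ L, ¬ p (insert a u))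
    (fun u L' L h => Or.imp (fun hp a ha => hp a (h ha)) fun hp a ha => hp a (h ha)) hM
    fun u _ L _ hL => ?_
  by_cases h : {a ∈ L | p (insert a u)}.Infinite
  · exact ⟨_, Set.sep_subset L _, h, Or.inl fun a ha => ha.2⟩
  · exact ⟨_, Set.sdiff_subset, hL.sdiff (Set.not_infinite.1 h),
      Or.inr fun a ha hp => ha.2 ⟨ha.1, hp⟩⟩

end Fusion

section Galvin

variable {F : Set (Finset ℕ)} {u : Finset ℕ} {L M N : Set ℕ}

/-- `L` accepts `u` if every continuation of `u` inside `L` has an initial segment in `F`. -/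
def Accepts (F : Set (Finset ℕ)) (u : Finset ℕ) (L : Set ℕ) : Prop :=
  ∀ P ⊆ tailAbove L u, P.Infinite → ∃ s ∈ F, IsInitSeg s (↑u ∪ P)

/-- `L` rejects `u` if no infinite subset of `L` accepts `u`. -/
def Rejects (F : Set (Finset ℕ)) (u : Finset ℕ) (L : Set ℕ) : Prop :=
  ∀ L' ⊆ L, L'.Infinite → ¬ Accepts F u L'

theorem accepts_antitone (F : Set (Finset ℕ)) (u : Finset ℕ) : Antitone (Accepts F u) :=
  fun _ _ h hacc P hP => hacc P (hP.trans (tailAbove_mono h u))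

theorem rejects_antitone (F : Set (Finset ℕ)) (u : Finset ℕ) : Antitone (Rejects F u) :=
  fun _ _ h hrej L' hL' => hrej L' (hL'.trans h)

theorem accepts_tailAbove : Accepts F u (tailAbove L u) ↔ Accepts F u L := by
  simp only [Accepts, tailAbove_tailAbove]

theorem rejects_tailAbove : Rejects F u (tailAbove L u) ↔ Rejects F u L := by
  refine ⟨fun h L' hL'L hL' hacc => ?_, fun h => rejects_antitone F u (tailAbove_subset L u) h⟩
  exact h _ (tailAbove_mono hL'L u) (infinite_tailAbove hL' u) (accepts_tailAbove.2 hacc)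

theorem exists_infinite_accepts_or_rejects (F : Set (Finset ℕ)) (hM : M.Infinite) :
    ∃ N ⊆ M, N.Infinite ∧ ∀ u : Finset ℕ, ↑u ⊆ N → Accepts F u N ∨ Rejects F u N := by
  obtain ⟨N, hNM, hN, hdec⟩ := exists_fusion (D := fun u L => Accepts F u L ∨ Rejects F u L)
    (fun u _ _ h => Or.imp (accepts_antitone F u h) (rejects_antitone F u h)) hM
    fun u _ L _ hL => by
      by_cases h : Rejects F u L
      · exact ⟨L, subset_rfl, hL, Or.inr h⟩
      · simp only [Rejects, not_forall, not_not] at h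
        obtain ⟨L', hL'L, hL', hacc⟩ := h
        exact ⟨L', hL'L, hL', Or.inl hacc⟩
  exact ⟨N, hNM, hN, fun u hu => (hdec u hu).imp accepts_tailAbove.1 rejects_tailAbove.1⟩

theorem Rejects.finite_accepts_insert (h : Rejects F u N) :
    {a ∈ tailAbove N u | Accepts F (insert a u) N}.Finite := by
  by_contra hinf
  refine h _ ((Set.sep_subset _ _).trans (tailAbove_subset N u)) hinf fun P hP hPinf => ?_
  have hmin : sInf P ∈ P := Nat.sInf_mem hPinf.nonempty
  have htail : tailAbove P {sInf P} ⊆ tailAbove N (insert (sInf P) u) := fun b hb =>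
    ⟨(hP hb.1).1.1.1, Finset.forall_mem_insert .. |>.2
      ⟨hb.2 _ (Finset.mem_singleton_self _), (hP hb.1).2⟩⟩
  have hunion : (↑(insert (sInf P) u) : Set ℕ) ∪ tailAbove P {sInf P} = ↑u ∪ P := by
    have hPsplit : insert (sInf P) (tailAbove P {sInf P}) = P := by
      refine Set.Subset.antisymm (Set.insert_subset hmin (tailAbove_subset _ _)) fun b hb => ?_
      rcases (Nat.sInf_le hb).eq_or_lt with h | h
      exacts [Or.inl h.symm, Or.inr ⟨hb, by simpa using h⟩]
    rw [Finset.coe_insert, Set.insert_union, ← Set.union_insert, hPsplit]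
  obtain ⟨s, hsF, hs⟩ := (hP hmin).1.2 _ htail (infinite_tailAbove hPinf _)
  exact ⟨s, hsF, hunion ▸ hs⟩

theorem Rejects.notMem (h : Rejects F u N) (hN : N.Infinite) : u ∉ F := fun hu =>
  h N subset_rfl hN fun _ hP _ =>
    ⟨u, hu, isInitSeg_union_of_lt fun b hb _ ha => (hP ha).2 b hb⟩

theorem Rejects.exists_infinite_forall_rejects (h : Rejects F ∅ N) (hN : N.Infinite)
    (hdec : ∀ u : Finset ℕ, ↑u ⊆ N → Accepts F u N ∨ Rejects F u N) :
    ∃ N' ⊆ N, N'.Infinite ∧ ∀ u : Finset ℕ, ↑u ⊆ N' → Rejects F u N := by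
  obtain ⟨N', hN'N, hN', hstep⟩ := exists_fusion
    (D := fun u L => Rejects F u N → ∀ a ∈ tailAbove L u, Rejects F (insert a u) N)
    (fun u _ _ hLL' hD hu a ha => hD hu a (tailAbove_mono hLL' u ha)) hN fun u huN L hLN hL => by
      by_cases hu : Rejects F u N
      · refine ⟨_, Set.sdiff_subset, hL.sdiff hu.finite_accepts_insert, fun _ a ha => ?_⟩
        have haN : a ∈ tailAbove N u := ⟨hLN ha.1.1, ha.2⟩
        exact (hdec _ (insert_subset_of_mem_tailAbove huN haN)).resolve_left
          fun hacc => ha.1.2 ⟨haN, hacc⟩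
      · exact ⟨L, subset_rfl, hL, fun hu' => absurd hu' hu⟩
  refine ⟨N', hN'N, hN', fun u => ?_⟩
  induction u using Finset.induction_on_max with
  | empty => exact fun _ => h
  | insert a u hlt ih =>
    intro hu
    rw [Finset.coe_insert, Set.insert_subset_iff] at hu
    exact hstep u hu.2 (ih hu.2) a ⟨⟨hu.1, hlt⟩, hlt⟩

/-- Galvin's theorem. -/
theorem exists_infinite_forall_notMem_or_exists_isInitSeg (F : Set (Finset ℕ)) (hM : M.Infinite) :
    ∃ N ⊆ M, N.Infinite ∧ ((∀ s : Finset ℕ, ↑s ⊆ N → s ∉ F) ∨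
      ∀ P ⊆ N, P.Infinite → ∃ s ∈ F, IsInitSeg s P) := by
  obtain ⟨N, hNM, hN, hdec⟩ := exists_infinite_accepts_or_rejects F hM
  rcases hdec ∅ (by simp) with hacc | hrej
  · refine ⟨N, hNM, hN, Or.inr fun P hP hPinf => ?_⟩
    simpa using hacc P (by simpa using hP) hPinf
  · obtain ⟨N', hN'N, hN', hall⟩ := hrej.exists_infinite_forall_rejects hN hdec
    exact ⟨N', hN'N.trans hNM, hN', Or.inl fun s hs => (hall s hs).notMem hN⟩

end Galvin

section Blocks

variable {B : Set (Finset ℕ)} {L M N : Set ℕ} {s : Finset ℕ} {t t' : ℕ → Finset ℕ}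

/-- Every member of `t i` lies below every member of `t j` when `i < j`. -/
def IsSuccessive (t : ℕ → Finset ℕ) : Prop :=
  ∀ i j, i < j → ∀ a ∈ t i, ∀ b ∈ t j, a < b

/-- A family of nonempty finite sets, none of which is a proper initial segment of another. -/
def IsThin (B : Set (Finset ℕ)) : Prop :=
  (∀ s ∈ B, s.Nonempty) ∧ ∀ s ∈ B, ∀ t ∈ B, IsInitSeg s ↑t → s = t

/-- Every infinite subset of `N` has an initial segment in `B`. -/
def IsFront (B : Set (Finset ℕ)) (N : Set ℕ) : Prop :=
  ∀ P ⊆ N, P.Infinite → ∃ s ∈ B, IsInitSeg s P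

/-- A sequence of successive members of `B` inside `N`. -/
def IsBlockSeq (B : Set (Finset ℕ)) (N : Set ℕ) (t : ℕ → Finset ℕ) : Prop :=
  IsSuccessive t ∧ ∀ i, t i ∈ B ∧ ↑(t i) ⊆ N

theorem exists_isSuccessive {p : ℕ → Finset ℕ → Prop}
    (hp : ∀ i b, ∃ s, p i s ∧ ∀ a ∈ s, b < a) : ∃ t, IsSuccessive t ∧ ∀ i, p i (t i) := by
  choose g hg hgt using hp
  let bound : ℕ → ℕ := fun n => Nat.rec 0 (fun i b => max b ((g i b).sup id)) n
  have hmono : Monotone bound := monotone_nat_of_le_succ fun n => le_max_left _ _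
  refine ⟨fun n => g n (bound n), fun i j hij a ha b hb => ?_, fun i => hg _ _⟩
  calc a ≤ (g i (bound i)).sup id := Finset.le_sup (f := id) ha
    _ ≤ bound (i + 1) := le_max_right _ _
    _ ≤ bound j := hmono hij
    _ < b := hgt j _ b hb

theorem IsSuccessive.infinite_iUnion (ht : IsSuccessive t) (hne : ∀ i, (t i).Nonempty) :
    (⋃ i, (t i : Set ℕ)).Infinite := by
  choose c hc using hne
  have hmono : StrictMono c := fun i j hij => ht i j hij _ (hc i) _ (hc j)
  refine (Set.infinite_range_of_injective hmono.injective).mono ?_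
  rintro _ ⟨i, rfl⟩
  exact Set.mem_iUnion.2 ⟨i, hc i⟩

theorem IsSuccessive.le_of_mem (ht : IsSuccessive t) (hne : ∀ i, (t i).Nonempty) {i : ℕ} :
    ∀ a ∈ t i, i ≤ a := by
  induction i with
  | zero => exact fun a _ => Nat.zero_le a
  | succ i ih =>
    intro a ha
    obtain ⟨b, hb⟩ := hne i
    exact (ih b hb).trans_lt (ht i (i + 1) i.lt_succ_self b hb a ha)

theorem IsSuccessive.cons (ht : IsSuccessive t) (hst : ∀ i, ∀ a ∈ s, ∀ b ∈ t i, a < b) :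
    IsSuccessive fun i => Nat.casesOn i s t := by
  rintro (_ | i) (_ | j) hij
  · exact absurd hij (lt_irrefl 0)
  · exact hst j
  · exact absurd hij (Nat.not_lt_zero _)
  · exact ht i j (Nat.lt_of_succ_lt_succ hij)

theorem IsFront.mono (hB : IsFront B N) (h : L ⊆ N) : IsFront B L :=
  fun P hP => hB P (hP.trans h)

theorem IsFront.exists_mem_forall_lt (hB : IsFront B N) (hN : N.Infinite) (b : ℕ) :
    ∃ s, (s ∈ B ∧ ↑s ⊆ N) ∧ ∀ a ∈ s, b < a := by
  obtain ⟨s, hsB, hs⟩ := hB _ (tailAbove_subset N {b}) (infinite_tailAbove hN {b})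
  exact ⟨s, ⟨hsB, hs.1.trans (tailAbove_subset N {b})⟩,
    fun a ha => (hs.1 ha).2 b (Finset.mem_singleton_self b)⟩

theorem IsFront.exists_isBlockSeq (hB : IsFront B N) (hN : N.Infinite) : ∃ t, IsBlockSeq B N t :=
  exists_isSuccessive fun _ => hB.exists_mem_forall_lt hN

theorem IsBlockSeq.mono (ht : IsBlockSeq B L t) (h : L ⊆ N) : IsBlockSeq B N t :=
  ⟨ht.1, fun i => ⟨(ht.2 i).1, (ht.2 i).2.trans h⟩⟩

theorem IsBlockSeq.cons (ht : IsBlockSeq B (tailAbove N s) t) (hsB : s ∈ B) (hsN : ↑s ⊆ N) :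
    IsBlockSeq B N fun i => Nat.casesOn i s t := by
  refine ⟨ht.1.cons fun i a ha b hb => ((ht.2 i).2 hb).2 a ha, ?_⟩
  rintro (_ | i)
  exacts [⟨hsB, hsN⟩, (ht.mono (tailAbove_subset N s)).2 i]

theorem IsSuccessive.mem_of_mem_of_le {i p b : ℕ} (ht : IsSuccessive t) (ht' : IsSuccessive t')
    (heq : ∀ j < i, t j = t' j) (hp : p ∈ t i) (hpt' : p ∈ ⋃ j, (t' j : Set ℕ)) (hb : b ∈ t' i)
    (hpb : p ≤ b) : p ∈ t' i := by
  obtain ⟨j, hj⟩ := Set.mem_iUnion.1 hpt'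
  rcases lt_trichotomy j i with hji | rfl | hij
  · exact absurd (ht j i hji p (heq j hji ▸ hj) p hp) (lt_irrefl p)
  · exact hj
  · exact absurd (ht' i j hij b hb p hj) hpb.not_gt

theorem IsThin.eq_of_biUnion_isInitSeg (hB : IsThin B) (ht : IsSuccessive t)
    (ht' : IsSuccessive t') (htB : ∀ i, t i ∈ B) (htB' : ∀ i, t' i ∈ B) {n : ℕ}
    (h : IsInitSeg ((Finset.range n).biUnion t) (⋃ i, (t' i : Set ℕ))) :
    ∀ i < n, t i = t' i := by
  intro i
  induction i using Nat.strong_induction_on with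
  | _ i ih =>
  intro hi
  have heq : ∀ j < i, t j = t' j := fun j hj => ih j hj (hj.trans hi)
  have hti : ∀ p ∈ t i, p ∈ (Finset.range n).biUnion t := fun p hp =>
    Finset.mem_biUnion.2 ⟨i, Finset.mem_range.2 hi, hp⟩
  have hcomp : IsInitSeg (t i) ↑(t' i) ∨ IsInitSeg (t' i) ↑(t i) := by
    refine isInitSeg_or_isInitSeg (fun p hp b hb hpb => ?_) fun p hp b hb hpb => ?_
    · exact ht.mem_of_mem_of_le ht' heq hp (h.1 (hti p hp)) hb hpb
    · refine ht'.mem_of_mem_of_le ht (fun j hj => (heq j hj).symm) hp ?_ hb hpb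
      have := h.2 p (Set.mem_iUnion.2 ⟨i, hp⟩) b (hti b hb) hpb
      obtain ⟨j, -, hj⟩ := Finset.mem_biUnion.1 this
      exact Set.mem_iUnion.2 ⟨j, hj⟩
  exact hcomp.elim (hB.2 _ (htB i) _ (htB' i)) fun h' => (hB.2 _ (htB' i) _ (htB i) h').symm

theorem IsThin.exists_infinite_homogeneous (hB : IsThin B) {p : ℕ → (ℕ → Finset ℕ) → Prop}
    (hp : ∀ n, DependsOn (p n) (Set.Iio n)) (hM : M.Infinite) :
    ∃ N ⊆ M, N.Infinite ∧ ((∀ t, IsBlockSeq B N t → ∀ n, ¬ p n t) ∨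
      ∀ t, IsBlockSeq B N t → ∃ n, p n t) := by
  obtain ⟨N, hNM, hN, h⟩ := exists_infinite_forall_notMem_or_exists_isInitSeg
    {s | ∃ n t, IsSuccessive t ∧ (∀ i, t i ∈ B) ∧ p n t ∧ s = (Finset.range n).biUnion t} hM
  refine ⟨N, hNM, hN, h.imp (fun h t ht n hpt => ?_) fun h t ht => ?_⟩
  · refine h ((Finset.range n).biUnion t) ?_ ⟨n, t, ht.1, fun i => (ht.2 i).1, hpt, rfl⟩
    rw [Finset.coe_biUnion]
    exact Set.iUnion₂_subset fun i _ => (ht.2 i).2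
  · obtain ⟨_, ⟨n, t', ht', htB', hpt', rfl⟩, hs⟩ := h _ (Set.iUnion_subset fun i => (ht.2 i).2)
      (ht.1.infinite_iUnion fun i => hB.1 _ (ht.2 i).1)
    have heq := hB.eq_of_biUnion_isInitSeg ht' ht.1 htB' (fun i => (ht.2 i).1) hs
    exact ⟨n, (hp n heq).mp hpt'⟩

theorem IsThin.exists_infinite_homogeneous_pair (hB : IsThin B) (hfront : IsFront B M)
    (p : Finset ℕ → Finset ℕ → Prop) (hM : M.Infinite) :
    ∃ N ⊆ M, N.Infinite ∧ ((∀ t, IsBlockSeq B N t → ¬ p (t 0) (t 1)) ∨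
      ∀ s t, s ∈ B → t ∈ B → ↑s ⊆ N → ↑t ⊆ tailAbove N s → p s t) := by
  obtain ⟨N, hNM, hN, h⟩ := hB.exists_infinite_homogeneous
    (p := fun n t => n = 2 ∧ p (t 0) (t 1)) (fun n t t' h => by
      by_cases hn : n = 2
      · subst hn
        simp only [h 0 (by simp), h 1 (by simp)]
      · simp only [hn, false_and]) hM
  refine ⟨N, hNM, hN, h.imp (fun h t ht hpt => h t ht 2 ⟨rfl, hpt⟩) fun h s t hs ht hsN htN => ?_⟩
  have hsub : tailAbove (tailAbove N s) t ⊆ N :=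
    (tailAbove_subset _ _).trans (tailAbove_subset _ _)
  obtain ⟨r, hr⟩ := (hfront.mono (hsub.trans hNM)).exists_isBlockSeq
    (infinite_tailAbove (infinite_tailAbove hN s) t)
  obtain ⟨n, -, hp⟩ := h _ ((hr.cons ht htN).cons hs hsN)
  exact hp

end Blocks

section Tuples

variable {M : Set ℕ} {n : ℕ}

theorem isThin_range_singleton : IsThin (Set.range fun a : ℕ => ({a} : Finset ℕ)) := by
  refine ⟨by rintro _ ⟨a, rfl⟩; exact Finset.singleton_nonempty a, ?_⟩
  rintro _ ⟨a, rfl⟩ _ ⟨b, rfl⟩ h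
  exact congrArg _ (by simpa using h.1)

theorem exists_infinite_homogeneous_tuple {p : (ℕ → ℕ) → Prop} (hp : DependsOn p (Set.Iio n))
    (hM : M.Infinite) :
    ∃ N ⊆ M, N.Infinite ∧ ((∀ k, StrictMono k → (∀ i, k i ∈ N) → ¬ p k) ∨
      ∀ k, StrictMono k → (∀ i, k i ∈ N) → p k) := by
  obtain ⟨N, hNM, hN, h⟩ := isThin_range_singleton.exists_infinite_homogeneous
    (p := fun m t => m = n ∧ p fun i => (t i).sup id)
    (fun m t t' h => by
      by_cases hm : m = n
      · subst hm
        simp only [true_and]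
        exact hp fun i hi => by rw [h i hi]
      · simp only [hm, false_and]) hM
  have hsingle (k : ℕ → ℕ) (hk : StrictMono k) (hkN : ∀ i, k i ∈ N) :
      IsBlockSeq (Set.range fun a : ℕ => ({a} : Finset ℕ)) N fun i => {k i} :=
    ⟨fun i j hij => by simpa using hk hij, fun i => ⟨⟨k i, rfl⟩, by simpa using hkN i⟩⟩
  refine ⟨N, hNM, hN, h.imp (fun h k hk hkN hpk => ?_) fun h k hk hkN => ?_⟩
  · exact h _ (hsingle k hk hkN) n ⟨rfl, by simpa using hpk⟩
  · obtain ⟨m, -, hpk⟩ := h _ (hsingle k hk hkN)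
    simpa using hpk

theorem exists_infinite_abs_sub_le_of_mem_Icc {h : (ℕ → ℕ) → ℝ} (hh : DependsOn h (Set.Iio n))
    (ε : ℝ) (j : ℕ) (lo : ℝ) (hM : M.Infinite)
    (hb : ∀ k, StrictMono k → (∀ i, k i ∈ M) → h k ∈ Set.Icc lo (lo + 2 ^ j * ε)) :
    ∃ N ⊆ M, N.Infinite ∧ ∀ k k', StrictMono k → StrictMono k' → (∀ i, k i ∈ N) →
      (∀ i, k' i ∈ N) → |h k - h k'| ≤ ε := by
  induction j generalizing lo M with
  | zero =>
    refine ⟨M, subset_rfl, hM, fun k k' hk hk' hkM hkM' => ?_⟩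
    obtain ⟨h1, h2⟩ := hb k hk hkM
    obtain ⟨h3, h4⟩ := hb k' hk' hkM'
    rw [abs_le]
    constructor <;> linarith
  | succ j ih =>
    obtain ⟨N, hNM, hN, hupper | hlower⟩ := exists_infinite_homogeneous_tuple
      (p := fun k => h k ≤ lo + 2 ^ j * ε) (fun k k' hk => congrArg (· ≤ _) (hh hk)) hM
    · obtain ⟨N', hN'N, hN'⟩ := ih (lo + 2 ^ j * ε) hN fun k hk hkN => by
        have hlt := hupper k hk hkN
        have hle := (hb k hk fun i => hNM (hkN i)).2
        rw [pow_succ] at hle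
        constructor <;> linarith
      exact ⟨N', hN'N.trans hNM, hN'⟩
    · obtain ⟨N', hN'N, hN'⟩ := ih lo hN fun k hk hkN =>
        ⟨(hb k hk fun i => hNM (hkN i)).1, hlower k hk hkN⟩
      exact ⟨N', hN'N.trans hNM, hN'⟩

theorem exists_infinite_abs_sub_le {h : (ℕ → ℕ) → ℝ} (hh : DependsOn h (Set.Iio n))
    {C ε : ℝ} (hε : 0 < ε) (hM : M.Infinite) (hC : ∀ k, |h k| ≤ C) :
    ∃ N ⊆ M, N.Infinite ∧ ∀ k k', StrictMono k → StrictMono k' → (∀ i, k i ∈ N) →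
      (∀ i, k' i ∈ N) → |h k - h k'| ≤ ε := by
  obtain ⟨j, hj⟩ := pow_unbounded_of_one_lt (2 * C / ε) one_lt_two
  rw [div_lt_iff₀ hε] at hj
  refine exists_infinite_abs_sub_le_of_mem_Icc hh ε j (-C) hM fun k _ _ => ?_
  obtain ⟨h1, h2⟩ := abs_le.1 (hC k)
  exact ⟨h1, by linarith⟩

end Tuples

/-! ### Weakly null sequences and `ℓ¹` -/

section NormingFunctionals

variable {X : Type*} [NormedAddCommGroup X] [NormedSpace ℝ X]

theorem exists_norm_le_one_apply_eq_norm (v : X) : ∃ f : X →L[ℝ] ℝ, ‖f‖ ≤ 1 ∧ f v = ‖v‖ := by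
  simpa using exists_dual_vector'' ℝ v

theorem abs_apply_le_norm {f : X →L[ℝ] ℝ} (hf : ‖f‖ ≤ 1) (v : X) : |f v| ≤ ‖v‖ := by
  simpa using f.le_of_opNorm_le hf v

theorem exists_finite_norming {K : Set X} (hK : TotallyBounded K) {δ : ℝ} (hδ : 0 < δ) :
    ∃ F : Set (X →L[ℝ] ℝ), F.Finite ∧ (∀ f ∈ F, ‖f‖ ≤ 1) ∧ ∀ v ∈ K, ∃ f ∈ F, ‖v‖ ≤ f v + δ := by
  obtain ⟨T, hT, hcover⟩ := Metric.totallyBounded_iff.1 hK (δ / 2) (half_pos hδ)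
  choose f hf hfnorm using exists_norm_le_one_apply_eq_norm (X := X)
  refine ⟨f '' T, hT.image f, by rintro _ ⟨w, -, rfl⟩; exact hf w, fun v hv => ?_⟩
  obtain ⟨w, hwT, hvw⟩ := Set.mem_iUnion₂.1 (hcover hv)
  rw [Metric.mem_ball, dist_eq_norm] at hvw
  refine ⟨f w, ⟨w, hwT, rfl⟩, ?_⟩
  have hdiff := abs_le.1 (abs_apply_le_norm (hf w) (v - w))
  rw [map_sub, hfnorm] at hdiff
  linarith [norm_sub_norm_le v w]

theorem totallyBounded_sum_smul (x : ℕ → X) (u : Finset ℕ) :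
    TotallyBounded {v | ∃ a : ℕ → ℝ, (∀ i ∈ u, |a i| ≤ 1) ∧ ∑ i ∈ u, a i • x i = v} := by
  classical
  have hcube : IsCompact (Set.pi Set.univ fun _ : ℕ => Set.Icc (-1 : ℝ) 1) :=
    isCompact_univ_pi fun _ => isCompact_Icc
  refine (hcube.image (show Continuous fun a : ℕ → ℝ => ∑ i ∈ u, a i • x i by
    fun_prop)).totallyBounded.subset ?_
  rintro _ ⟨a, ha, rfl⟩
  refine ⟨fun i => if i ∈ u then a i else 0, fun i _ => ?_,
    Finset.sum_congr rfl fun i hi => by simp only [if_pos hi]⟩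
  by_cases hi : i ∈ u
  · simpa only [if_pos hi, Set.mem_Icc] using abs_le.1 (ha i hi)
  · simp only [if_neg hi]
    norm_num

end NormingFunctionals

section AlmostMonotone

variable {X : Type} [NormedAddCommGroup X] [NormedSpace ℝ X] {x : ℕ → X} {M N : Set ℕ} {δ : ℝ}

theorem WeaklyNull.exists_infinite_sum_abs_le (hx : WeaklyNull x) {F : Set (X →L[ℝ] ℝ)}
    (hF : F.Finite) (hM : M.Infinite) (hδ : 0 < δ) :
    ∃ L ⊆ M, L.Infinite ∧ ∀ w : Finset ℕ, ↑w ⊆ L → ∀ f ∈ F, ∑ i ∈ w, |f (x i)| ≤ δ := by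
  classical
  have hsmall (n : ℕ) : ∃ᶠ i in atTop, i ∈ M ∧ ∀ f ∈ F, |f (x i)| ≤ δ / 2 / 2 ^ n := by
    refine ((Nat.frequently_atTop_iff_infinite (p := (· ∈ M))).2 hM).and_eventually ?_
    rw [eventually_all_finite hF]
    intro f _
    have hlim := (hx f).abs
    rw [abs_zero] at hlim
    exact hlim.eventually_le_const (by positivity)
  obtain ⟨φ, hφ, hφM⟩ := extraction_forall_of_frequently hsmall
  refine ⟨Set.range φ, ?_, Set.infinite_range_of_injective hφ.injective, fun w hw f hf => ?_⟩
  · rintro _ ⟨n, rfl⟩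
    exact (hφM n).1
  obtain ⟨v, rfl⟩ : ∃ v : Finset ℕ, v.image φ = w := by
    rw [← Set.image_univ] at hw
    obtain ⟨v, -, hv⟩ := Finset.subset_set_image_iff.1 hw
    exact ⟨v, hv⟩
  rw [Finset.sum_image hφ.injective.injOn]
  calc ∑ n ∈ v, |f (x (φ n))| ≤ ∑ n ∈ v, δ / 2 / 2 ^ n :=
        Finset.sum_le_sum fun n _ => (hφM n).2 f hf
    _ ≤ ∑' n, δ / 2 / 2 ^ n :=
        Summable.sum_le_tsum v (fun n _ => by positivity) (summable_geometric_two' δ)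
    _ = δ := tsum_geometric_two' δ

/-- Passing to an initial segment of the support increases the norm of a vector with coefficients
in `[-1, 1]` by at most `δ`; a finitary substitute for the bounded projections of a basis. -/
def IsAlmostMonotone (x : ℕ → X) (δ : ℝ) (N : Set ℕ) : Prop :=
  ∀ t : Finset ℕ, ↑t ⊆ N → ∀ u : Finset ℕ, IsInitSeg u ↑t → ∀ a : ℕ → ℝ, (∀ i ∈ t, |a i| ≤ 1) →
    ‖∑ i ∈ u, a i • x i‖ ≤ ‖∑ i ∈ t, a i • x i‖ + δ

theorem isAlmostMonotone_antitone (x : ℕ → X) (δ : ℝ) : Antitone (IsAlmostMonotone x δ) :=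
  fun _ _ h hN t ht => hN t (ht.trans h)

theorem WeaklyNull.exists_infinite_norm_le_norm_add (hx : WeaklyNull x) (hM : M.Infinite)
    (hδ : 0 < δ) (u : Finset ℕ) :
    ∃ L ⊆ M, L.Infinite ∧ ∀ w : Finset ℕ, ↑w ⊆ L → ∀ a : ℕ → ℝ, (∀ i ∈ u, |a i| ≤ 1) →
      (∀ i ∈ w, |a i| ≤ 1) →
      ‖∑ i ∈ u, a i • x i‖ ≤ ‖∑ i ∈ u, a i • x i + ∑ i ∈ w, a i • x i‖ + δ := by
  obtain ⟨F, hF, hF1, hnorming⟩ :=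
    exists_finite_norming (totallyBounded_sum_smul x u) (half_pos hδ)
  obtain ⟨L, hLM, hL, hsmall⟩ := hx.exists_infinite_sum_abs_le hF hM (half_pos hδ)
  refine ⟨L, hLM, hL, fun w hw a hau haw => ?_⟩
  obtain ⟨f, hfF, hf⟩ := hnorming _ ⟨a, hau, rfl⟩
  have htail : |f (∑ i ∈ w, a i • x i)| ≤ δ / 2 := by
    rw [map_sum]
    refine (Finset.abs_sum_le_sum_abs _ _).trans ((Finset.sum_le_sum fun i hi => ?_).trans
      (hsmall w hw f hfF))
    rw [map_smul, smul_eq_mul, abs_mul]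
    exact mul_le_of_le_one_left (abs_nonneg _) (haw i hi)
  have htotal := abs_le.1 (abs_apply_le_norm (hF1 f hfF)
    (∑ i ∈ u, a i • x i + ∑ i ∈ w, a i • x i))
  rw [map_add] at htotal
  linarith [abs_le.1 htail]

theorem WeaklyNull.exists_infinite_isAlmostMonotone (hx : WeaklyNull x) (hM : M.Infinite)
    (hδ : 0 < δ) : ∃ N ⊆ M, N.Infinite ∧ IsAlmostMonotone x δ N := by
  obtain ⟨N, hNM, hN, hmono⟩ := exists_fusion (D := fun u L => ∀ w : Finset ℕ, ↑w ⊆ L →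
      ∀ a : ℕ → ℝ, (∀ i ∈ u, |a i| ≤ 1) → (∀ i ∈ w, |a i| ≤ 1) →
      ‖∑ i ∈ u, a i • x i‖ ≤ ‖∑ i ∈ u, a i • x i + ∑ i ∈ w, a i • x i‖ + δ)
    (fun u _ _ h hD w hw => hD w (hw.trans h)) hM
    fun u _ L _ hL => hx.exists_infinite_norm_le_norm_add hL hδ u
  refine ⟨N, hNM, hN, fun t ht u hu a ha => ?_⟩
  have hut : u ⊆ t := hu.1
  have htail : ↑(t \ u) ⊆ tailAbove N u := fun b hb => by
    have hb := Finset.mem_sdiff.1 hb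
    exact ⟨ht hb.1, fun i hi => lt_of_not_ge fun hbi => hb.2 (hu.2 b hb.1 i hi hbi)⟩
  have := hmono u (hu.1.trans ht) (t \ u) htail a (fun i hi => ha i (hut hi))
    fun i hi => ha i (Finset.mem_sdiff.1 hi).1
  rwa [add_comm (∑ i ∈ u, a i • x i), Finset.sum_sdiff hut] at this

end AlmostMonotone

section EllOne

variable {X : Type} [NormedAddCommGroup X] [NormedSpace ℝ X]

theorem embeds_ellOne_of_le_norm_sum [CompleteSpace X] {w : ℕ → X} {c C : ℝ} (hc : 0 < c)
    (hC : ∀ j, ‖w j‖ ≤ C) (hlower : ∀ (a : ℕ → ℝ) (n : ℕ),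
      c * ∑ j ∈ Finset.range n, |a j| ≤ ‖∑ j ∈ Finset.range n, a j • w j‖) :
    Embeds ellOne X := by
  have hC0 : 0 ≤ C := (norm_nonneg _).trans (hC 0)
  have hnorm (z : ellOne) : HasSum (fun i => |z i|) ‖z‖ := by
    simpa using lp.hasSum_norm (p := 1) (by simp) z
  have hbound (z : ellOne) (i : ℕ) : ‖z i • w i‖ ≤ |z i| * C := by
    rw [norm_smul, Real.norm_eq_abs]
    exact mul_le_mul_of_nonneg_left (hC i) (abs_nonneg _)
  have hsummable (z : ellOne) : Summable fun i => z i • w i :=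
    Summable.of_norm_bounded ((hnorm z).summable.mul_right C) (hbound z)
  let T : ellOne →ₗ[ℝ] X :=
    { toFun := fun z => ∑' i, z i • w i
      map_add' := fun z z' => by
        rw [← (hsummable z).tsum_add (hsummable z')]
        simp [add_smul]
      map_smul' := fun r z => by
        rw [RingHom.id_apply, ← (hsummable z).tsum_const_smul]
        simp [mul_smul] }
  refine ⟨T, c, C + 1, hc, by positivity, fun z => ⟨?_, ?_⟩⟩
  · exact le_of_tendsto_of_tendsto' ((hnorm z).tendsto_sum_nat.const_mul c)
      (hsummable z).hasSum.tendsto_sum_nat.norm fun n => hlower _ n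
  · calc ‖T z‖ ≤ ‖z‖ * C := tsum_of_norm_bounded ((hnorm z).mul_right C) (hbound z)
      _ ≤ (C + 1) * ‖z‖ := by linarith [norm_nonneg z]

/-- Rosenthal's criterion: a functional separating the positive from the negative coefficients and
one doing the opposite together detect the `ℓ¹`-norm. -/
theorem le_norm_sum_of_separating {w : ℕ → X} {c : ℝ}
    (h : ∀ (J : Set ℕ) (n : ℕ), ∃ f : X →L[ℝ] ℝ, ‖f‖ ≤ 1 ∧ ∀ j < n,
      (j ∈ J → c ≤ f (w j)) ∧ (j ∉ J → f (w j) ≤ c / 2)) (a : ℕ → ℝ) (n : ℕ) :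
    c / 4 * ∑ j ∈ Finset.range n, |a j| ≤ ‖∑ j ∈ Finset.range n, a j • w j‖ := by
  obtain ⟨f, hf, hfsep⟩ := h {j | 0 ≤ a j} n
  obtain ⟨g, hg, hgsep⟩ := h {j | 0 ≤ a j}ᶜ n
  have hdiff : c / 2 * ∑ j ∈ Finset.range n, |a j| ≤
      f (∑ j ∈ Finset.range n, a j • w j) - g (∑ j ∈ Finset.range n, a j • w j) := by
    rw [map_sum, map_sum, ← Finset.sum_sub_distrib, Finset.mul_sum]
    refine Finset.sum_le_sum fun j hj => ?_
    obtain ⟨hf1, hf2⟩ := hfsep j (Finset.mem_range.1 hj)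
    obtain ⟨hg1, hg2⟩ := hgsep j (Finset.mem_range.1 hj)
    simp only [map_smul, smul_eq_mul]
    rcases le_or_gt 0 (a j) with ha | ha
    · have := hg2 (not_not.2 ha)
      rw [abs_of_nonneg ha]
      nlinarith [hf1 ha]
    · have := hg1 (not_le.2 ha)
      rw [abs_of_neg ha]
      nlinarith [hf2 (not_le.2 ha)]
  linarith [abs_le.1 (abs_apply_le_norm hf (∑ j ∈ Finset.range n, a j • w j)),
    abs_le.1 (abs_apply_le_norm hg (∑ j ∈ Finset.range n, a j • w j))]

theorem exists_strictMono_even_odd_eq (J : Set ℕ) : ∃ φ : ℕ → ℕ, StrictMono φ ∧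
    ∀ j, (j ∈ J → φ (2 * j) = 3 * j + 1) ∧ (j ∉ J → φ (2 * j + 1) = 3 * j + 1) := by
  classical
  let φ : ℕ → ℕ := fun i => 3 * (i / 2) + i % 2 + if i / 2 ∈ J then 1 else 0
  refine ⟨φ, strictMono_nat_of_lt_succ fun i => ?_, fun j => ⟨fun hj => ?_, fun hj => ?_⟩⟩
  · rcases Nat.even_or_odd' i with ⟨j, rfl | rfl⟩
    · simp only [φ, show (2 * j + 1) / 2 = j by omega, show 2 * j / 2 = j by omega]
      omega
    · simp only [φ, show (2 * j + 1) / 2 = j by omega, show (2 * j + 1 + 1) / 2 = j + 1 by omega]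
      split_ifs <;> omega
  · simp [φ, hj]
  · simp only [φ, show (2 * j + 1) / 2 = j by omega, if_neg hj]
    omega

/-- Some functional of norm at most `1` is at least `c` at the even and at most `c / 2` at the odd
ones among the first `n` vectors. -/
def Alternates (c : ℝ) (n : ℕ) (v : ℕ → X) : Prop :=
  ∃ f : X →L[ℝ] ℝ, ‖f‖ ≤ 1 ∧ ∀ i < n, (Even i → c ≤ f (v i)) ∧ (¬ Even i → f (v i) ≤ c / 2)

theorem dependsOn_alternates (c : ℝ) (n : ℕ) : DependsOn (Alternates (X := X) c n) (Set.Iio n) :=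
  fun v v' h => propext <| exists_congr fun f => and_congr_right fun _ =>
    forall₂_congr fun i hi => by rw [h i hi]

theorem embeds_ellOne_of_forall_alternates [CompleteSpace X] {v : ℕ → X} {c C : ℝ} (hc : 0 < c)
    (hC : ∀ j, ‖v j‖ ≤ C) (h : ∀ φ, StrictMono φ → ∀ n, Alternates c n (v ∘ φ)) :
    Embeds ellOne X := by
  refine embeds_ellOne_of_le_norm_sum (w := fun j => v (3 * j + 1)) (c := c / 4) (by positivity)
    (fun j => hC _) (le_norm_sum_of_separating fun J n => ?_)
  obtain ⟨φ, hφ, hφJ⟩ := exists_strictMono_even_odd_eq J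
  obtain ⟨f, hf, hsep⟩ := h φ hφ (2 * n)
  refine ⟨f, hf, fun j hj => ⟨fun hjJ => ?_, fun hjJ => ?_⟩⟩
  · simpa [(hφJ j).1 hjJ] using (hsep (2 * j) (by omega)).1 (by simp)
  · simpa [(hφJ j).2 hjJ] using (hsep (2 * j + 1) (by omega)).2 (by simp)

end EllOne

section BlockSums

variable {X : Type} [NormedAddCommGroup X] [NormedSpace ℝ X] {x : ℕ → X} {v : Finset ℕ → X}
  {B : Set (Finset ℕ)} {M N : Set ℕ} {c C : ℝ}

theorem IsThin.exists_infinite_not_alternates [CompleteSpace X] (hB : IsThin B)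
    (hl1 : ¬ Embeds ellOne X) (hfront : IsFront B M) (hC : ∀ s ∈ B, ‖v s‖ ≤ C) (hc : 0 < c)
    (hM : M.Infinite) :
    ∃ L ⊆ M, L.Infinite ∧ ∀ t, IsBlockSeq B L t → ∃ n, ¬ Alternates c n (v ∘ t) := by
  obtain ⟨L, hLM, hL, halt | hnot⟩ := hB.exists_infinite_homogeneous
    (p := fun n t => ¬ Alternates c n (v ∘ t))
    (fun n t t' h => congrArg Not <| dependsOn_alternates c n fun i hi => by
      simp only [Function.comp_apply, h i hi]) hM
  · obtain ⟨t, ht⟩ := (hfront.mono hLM).exists_isBlockSeq hL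
    refine absurd ?_ hl1
    refine embeds_ellOne_of_forall_alternates hc (fun j => hC _ (ht.2 j).1) fun φ hφ n => ?_
    exact not_not.1 (halt (t ∘ φ) ⟨fun i j hij => ht.1 _ _ (hφ hij), fun i => ht.2 _⟩ n)
  · exact ⟨L, hLM, hL, hnot⟩

theorem IsThin.exists_infinite_forall_not_alternates [CompleteSpace X] (hB : IsThin B)
    (hl1 : ¬ Embeds ellOne X) (hfront : IsFront B M) (hC : ∀ s ∈ B, ‖v s‖ ≤ C) (hM : M.Infinite) :
    ∃ L ⊆ M, L.Infinite ∧ ∀ u : Finset ℕ, ↑u ⊆ L → ∀ t, IsBlockSeq B (tailAbove L u) t →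
      ∃ n, ¬ Alternates (1 / ((#u : ℝ) + 1)) n (v ∘ t) :=
  exists_fusion (D := fun u L => ∀ t, IsBlockSeq B L t →
      ∃ n, ¬ Alternates (1 / ((#u : ℝ) + 1)) n (v ∘ t))
    (fun _ _ _ h hD t ht => hD t (ht.mono h)) hM fun _ _ _ hLM hL =>
    hB.exists_infinite_not_alternates hl1 (hfront.mono hLM) hC (by positivity) hL

theorem exists_frequently_le_of_not_weaklyNull {z : ℕ → X} (hz : ¬ WeaklyNull z) :
    ∃ (g : X →L[ℝ] ℝ) (c : ℝ), ‖g‖ ≤ 1 ∧ 0 < c ∧ ∃ᶠ j in atTop, c ≤ g (z j) := by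
  simp only [WeaklyNull, not_forall] at hz
  obtain ⟨f, hf⟩ := hz
  obtain ⟨e, he, hfreq⟩ : ∃ e > 0, ∃ᶠ j in atTop, e ≤ |f (z j)| := by
    simpa [Metric.tendsto_nhds, Filter.Frequently, Real.dist_eq] using hf
  simp only [le_abs, frequently_or_distrib] at hfreq
  obtain ⟨h, hh, hfreq⟩ : ∃ h : X →L[ℝ] ℝ, h ≠ 0 ∧ ∃ᶠ j in atTop, e ≤ h (z j) := by
    have hne {h : X →L[ℝ] ℝ} (hh : ∃ᶠ j in atTop, e ≤ h (z j)) : h ≠ 0 := by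
      rintro rfl
      obtain ⟨j, hj⟩ := hh.exists
      exact hj.not_gt he
    rcases hfreq with hfreq | hfreq
    · exact ⟨f, hne hfreq, hfreq⟩
    · exact ⟨-f, hne (h := -f) hfreq, hfreq⟩
  have hpos : 0 < ‖h‖⁻¹ := inv_pos.2 (norm_pos_iff.2 hh)
  refine ⟨‖h‖⁻¹ • h, ‖h‖⁻¹ * e, ?_, by positivity, hfreq.mono fun j hj => ?_⟩
  · rw [norm_smul, norm_inv, norm_norm, inv_mul_cancel₀ (norm_ne_zero_iff.2 hh)]
  · exact mul_le_mul_of_nonneg_left hj hpos.le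

theorem IsThin.exists_isBlockSeq_alternates (hB : IsThin B) (hx : WeaklyNull x)
    (hfront : IsFront B N) (hN : N.Infinite) {t : ℕ → Finset ℕ} (ht : IsBlockSeq B N t)
    {g : X →L[ℝ] ℝ} (hg : ‖g‖ ≤ 1) (hc : 0 < c)
    (hfreq : ∃ᶠ j in atTop, c ≤ g (∑ i ∈ t j, x i)) (u : Finset ℕ) :
    ∃ r, IsBlockSeq B (tailAbove N u) r ∧ ∀ n, Alternates c n fun j => ∑ i ∈ r j, x i := by
  obtain ⟨P, hPN, hP, hsmall⟩ := hx.exists_infinite_sum_abs_le (Set.finite_singleton g)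
    (infinite_tailAbove hN u) (half_pos hc)
  obtain ⟨r, hr, hrQ⟩ := exists_isSuccessive (p := fun i s => (s ∈ B ∧ ↑s ⊆ tailAbove N u) ∧
      (Even i → c ≤ g (∑ k ∈ s, x k)) ∧ (¬ Even i → g (∑ k ∈ s, x k) ≤ c / 2)) fun i b => by
    by_cases hi : Even i
    · obtain ⟨j, hj, hgj⟩ := frequently_atTop.1 hfreq (b + u.sup id + 1)
      have hlow (a : ℕ) (ha : a ∈ t j) : b + u.sup id + 1 ≤ a :=
        hj.trans (ht.1.le_of_mem (fun i => hB.1 _ (ht.2 i).1) a ha)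
      refine ⟨t j, ⟨⟨(ht.2 j).1, fun a ha => ⟨(ht.2 j).2 ha, fun k hk => ?_⟩⟩, fun _ => hgj,
        absurd hi⟩, fun a ha => ?_⟩
      · have := Finset.le_sup (f := id) hk
        have := hlow a ha
        simp only [id_eq] at *
        omega
      · have := hlow a ha
        omega
    · obtain ⟨s, ⟨hsB, hsP⟩, hbs⟩ :=
        (hfront.mono (hPN.trans (tailAbove_subset N u))).exists_mem_forall_lt hP b
      refine ⟨s, ⟨⟨hsB, hsP.trans hPN⟩, fun h => absurd h hi, fun _ => ?_⟩, hbs⟩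
      rw [map_sum]
      exact (Finset.sum_le_sum fun i _ => le_abs_self _).trans (hsmall s hsP g rfl)
  exact ⟨r, ⟨hr, fun i => (hrQ i).1⟩, fun n => ⟨g, hg, fun i _ => (hrQ i).2⟩⟩

theorem IsThin.exists_infinite_weaklyNull [CompleteSpace X] (hB : IsThin B)
    (hl1 : ¬ Embeds ellOne X) (hx : WeaklyNull x) (hN : N.Infinite) (hfront : IsFront B N)
    (hC : ∀ s ∈ B, ‖∑ i ∈ s, x i‖ ≤ C) :
    ∃ L ⊆ N, L.Infinite ∧ ∀ t, IsBlockSeq B L t → WeaklyNull fun j => ∑ i ∈ t j, x i := by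
  obtain ⟨L, hLN, hL, hnot⟩ :=
    hB.exists_infinite_forall_not_alternates (v := fun s => ∑ i ∈ s, x i) hl1 hfront hC hN
  refine ⟨L, hLN, hL, fun t ht => ?_⟩
  by_contra hcon
  obtain ⟨g, c, hg, hc, hfreq⟩ := exists_frequently_le_of_not_weaklyNull hcon
  obtain ⟨m, hm⟩ := exists_nat_one_div_lt hc
  obtain ⟨u, huL, rfl⟩ := hL.exists_subset_card_eq m
  obtain ⟨r, hr, halt⟩ := hB.exists_isBlockSeq_alternates hx (hfront.mono hLN) hL ht hg
    (Nat.one_div_pos_of_nat (n := #u)) (hfreq.mono fun _ h => hm.le.trans h) u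
  obtain ⟨n, hn⟩ := hnot u huL r hr
  exact hn (halt n)

end BlockSums

/-! ### Existence of spreading models -/

section Spreading

variable {X : Type*} [NormedAddCommGroup X] [NormedSpace ℝ X] {y : ℕ → X} {n : ℕ}

/-- The norm of the combination of `n` successive terms of `y` with coefficients `v` varies by at
most `ε` as the indices of these terms range over the increasing sequences in `N`. -/
def IsSpreadingUpTo (y : ℕ → X) (v : Fin n → ℝ) (ε : ℝ) (N : Set ℕ) : Prop :=
  ∀ k k' : ℕ → ℕ, StrictMono k → StrictMono k' → (∀ i, k i ∈ N) → (∀ i, k' i ∈ N) →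
    |‖∑ i, v i • y (k i)‖ - ‖∑ i, v i • y (k' i)‖| ≤ ε

theorem isSpreadingUpTo_antitone (y : ℕ → X) (v : Fin n → ℝ) (ε : ℝ) :
    Antitone (IsSpreadingUpTo y v ε) :=
  fun _ _ hL h k k' hk hk' hkL hk'L => h k k' hk hk' (fun i => hL (hkL i)) fun i => hL (hk'L i)

theorem abs_norm_sum_smul_sub_le {z : Fin n → X} (hz : ∀ i, ‖z i‖ ≤ 1) (v w : Fin n → ℝ) :
    |‖∑ i, v i • z i‖ - ‖∑ i, w i • z i‖| ≤ n * ‖v - w‖ := by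
  refine (abs_norm_sub_norm_le _ _).trans ?_
  rw [← Finset.sum_sub_distrib]
  refine (norm_sum_le _ _).trans ((Finset.sum_le_card_nsmul _ _ ‖v - w‖ fun i _ => ?_).trans_eq
    (by simp))
  rw [← sub_smul, norm_smul]
  exact (mul_le_of_le_one_right (norm_nonneg _) (hz i)).trans (norm_le_pi_norm (v - w) i)

theorem IsSpreadingUpTo.of_norm_sub_le (hy : ∀ i, ‖y i‖ ≤ 1) {v w : Fin n → ℝ} {δ ε : ℝ}
    {N : Set ℕ} (h : IsSpreadingUpTo y w ε N) (hvw : n * ‖v - w‖ ≤ δ) :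
    IsSpreadingUpTo y v (ε + 2 * δ) N := by
  intro k k' hk hk' hkN hk'N
  have hw := abs_le.1 (h k k' hk hk' hkN hk'N)
  have hd := abs_le.1 ((abs_norm_sum_smul_sub_le (fun i : Fin n => hy (k i)) v w).trans hvw)
  have hd' := abs_le.1 ((abs_norm_sum_smul_sub_le (fun i : Fin n => hy (k' i)) v w).trans hvw)
  rw [abs_le]
  constructor <;> linarith

theorem exists_infinite_isSpreadingUpTo (hy : ∀ i, ‖y i‖ ≤ 1) (v : Fin n → ℝ) {ε : ℝ}
    (hε : 0 < ε) {M : Set ℕ} (hM : M.Infinite) :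
    ∃ N ⊆ M, N.Infinite ∧ IsSpreadingUpTo y v ε N := by
  refine exists_infinite_abs_sub_le (n := n) (h := fun k => ‖∑ i : Fin n, v i • y (k i)‖)
    (C := n * ‖v‖) (fun k k' hk => ?_) hε hM fun k => ?_
  · simp only
    congr 1
    exact Finset.sum_congr rfl fun i _ => by rw [hk i i.2]
  · simpa using abs_norm_sum_smul_sub_le (fun i : Fin n => hy (k i)) v 0

theorem exists_infinite_forall_isSpreadingUpTo (hy : ∀ i, ‖y i‖ ≤ 1) (n : ℕ) {ε : ℝ}
    (hε : 0 < ε) {M : Set ℕ} (hM : M.Infinite) :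
    ∃ N ⊆ M, N.Infinite ∧ ∀ v : Fin n → ℝ, (∀ i, |v i| ≤ 1) → IsSpreadingUpTo y v ε N := by
  have hcube : IsCompact (Set.pi Set.univ fun _ : Fin n => Set.Icc (-1 : ℝ) 1) :=
    isCompact_univ_pi fun _ => isCompact_Icc
  obtain ⟨T, -, hT, hcover⟩ :=
    hcube.finite_cover_balls (show 0 < ε / 4 / (n + 1) by positivity)
  obtain ⟨N, hNM, hN, hspread⟩ := exists_infinite_forall_mem_finset
    (fun w : Fin n → ℝ => isSpreadingUpTo_antitone y w (ε / 2)) hT.toFinset hM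
    fun w _ L _ hL => exists_infinite_isSpreadingUpTo hy w (half_pos hε) hL
  refine ⟨N, hNM, hN, fun v hv => ?_⟩
  obtain ⟨w, hwT, hvw⟩ := Set.mem_iUnion₂.1 (hcover fun i _ => abs_le.1 (hv i))
  rw [Metric.mem_ball, dist_eq_norm, lt_div_iff₀ (by positivity)] at hvw
  convert (hspread w (hT.mem_toFinset.2 hwT)).of_norm_sub_le hy (v := v) (δ := ε / 4)
    (by nlinarith [norm_nonneg (v - w)]) using 1
  ring

/-- The norms of the combinations of `n` terms of `z` with given coefficients in `[-1, 1]` all agree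
up to `1 / (n + 1)`, as long as the terms are taken beyond `n`. -/
def IsAsymptoticallySpreading (z : ℕ → X) : Prop :=
  ∀ (n : ℕ) (v : Fin n → ℝ), (∀ i, |v i| ≤ 1) → IsSpreadingUpTo z v (1 / (n + 1)) (Set.Ici n)

theorem exists_strictMono_isAsymptoticallySpreading (hy : ∀ i, ‖y i‖ ≤ 1) :
    ∃ ψ : ℕ → ℕ, StrictMono ψ ∧ IsAsymptoticallySpreading fun i => y (ψ i) := by
  classical
  obtain ⟨N, -, hN, hspread⟩ := exists_fusion
    (D := fun u L => ∀ v : Fin u.card → ℝ, (∀ i, |v i| ≤ 1) →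
      IsSpreadingUpTo y v (1 / (u.card + 1)) L)
    (fun u _ _ hL h v hv => isSpreadingUpTo_antitone y v _ hL (h v hv)) Set.infinite_univ
    fun u _ _ _ hL => exists_infinite_forall_isSpreadingUpTo hy u.card (by positivity) hL
  have hψ : StrictMono (Nat.nth (· ∈ N)) := Nat.nth_strictMono hN
  have hψN (i : ℕ) : Nat.nth (· ∈ N) i ∈ N := Nat.nth_mem_of_infinite hN i
  refine ⟨_, hψ, fun n => ?_⟩
  let u := (Finset.range n).image (Nat.nth (· ∈ N))
  have hu : u.card = n := by
    rw [Finset.card_image_of_injective _ hψ.injective, Finset.card_range]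
  have htail {i : ℕ} (hi : n ≤ i) : Nat.nth (· ∈ N) i ∈ tailAbove N u := by
    refine ⟨hψN i, Finset.forall_mem_image.2 fun j hj => hψ ?_⟩
    exact (Finset.mem_range.1 hj).trans_le hi
  have hun := hspread u (by simpa [u, Set.subset_def] using fun i _ => hψN i)
  rw [hu] at hun
  exact fun v hv k k' hk hk' hkn hk'n => hun v hv _ _ (hψ.comp hk) (hψ.comp hk')
    (fun i => htail (hkn i)) fun i => htail (hk'n i)

end Spreading

section SpreadingModels

theorem exists_seminorm_tendsto {ι V : Type*} [AddCommGroup V] [Module ℝ V] (l : Ultrafilter ι)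
    {p : ι → Seminorm ℝ V} (hp : ∀ v, ∃ C, ∀ j, p j v ≤ C) :
    ∃ q : Seminorm ℝ V, ∀ v, Tendsto (fun j => p j v) l (𝓝 (q v)) := by
  have hlim (v : V) : ∃ r, Tendsto (fun j => p j v) l (𝓝 r) := by
    obtain ⟨C, hC⟩ := hp v
    have hmem : ∀ᶠ j in (l : Filter ι), p j v ∈ Set.Icc 0 C :=
      Eventually.of_forall fun j => ⟨apply_nonneg (p j) v, hC j⟩
    obtain ⟨r, -, hr⟩ := isCompact_Icc.ultrafilter_le_nhds (l.map fun j => p j v)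
      (le_principal_iff.2 hmem)
    exact ⟨r, hr⟩
  choose q hq using hlim
  refine ⟨Seminorm.of q (fun v w => ?_) fun c v => ?_, hq⟩
  · exact le_of_tendsto_of_tendsto' (hq (v + w)) ((hq v).add (hq w)) fun j =>
      map_add_le_add (p j) v w
  · exact tendsto_nhds_unique (hq (c • v)) (((hq v).const_mul ‖c‖).congr fun j =>
      (map_smul_eq_mul (p j) c v).symm)

theorem exists_completeSpace_linearMap_norm_eq {V : Type} [AddCommGroup V] [Module ℝ V]
    (p : Seminorm ℝ V) : ∃ (E : Type) (_ : NormedAddCommGroup E) (_ : NormedSpace ℝ E)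
      (_ : CompleteSpace E) (T : V →ₗ[ℝ] E), ∀ v, ‖T v‖ = p v := by
  let _ : SeminormedAddCommGroup V := p.toAddGroupSeminorm.toSeminormedAddCommGroup
  let _ : NormedSpace ℝ V := { norm_smul_le := fun c v => (map_smul_eq_mul p c v).le }
  exact ⟨UniformSpace.Completion V, inferInstance, inferInstance, inferInstance,
    (UniformSpace.Completion.toComplL (𝕜 := ℝ) (E := V)).toLinearMap,
    UniformSpace.Completion.norm_coe⟩

variable {X : Type} [NormedAddCommGroup X] [NormedSpace ℝ X]

theorem IsAsymptoticallySpreading.exists_isSpreadingModel {z : ℕ → X}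
    (hz : IsAsymptoticallySpreading z) (hz1 : ∀ i, ‖z i‖ ≤ 1) :
    ∃ (E : Type) (_ : NormedAddCommGroup E) (_ : NormedSpace ℝ E) (_ : CompleteSpace E)
      (e : ℕ → E), IsSpreadingModel z e := by
  let p (j : ℕ) : Seminorm ℝ (ℕ →₀ ℝ) :=
    (normSeminorm ℝ X).comp (Finsupp.linearCombination ℝ fun i => z (j + i))
  have hp (v : ℕ →₀ ℝ) : ∃ C, ∀ j, p j v ≤ C := by
    refine ⟨∑ i ∈ v.support, |v i|, fun j => ?_⟩
    simp only [p, Seminorm.comp_apply, coe_normSeminorm, Finsupp.linearCombination_apply]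
    refine (norm_sum_le _ _).trans (Finset.sum_le_sum fun i _ => ?_)
    simpa [norm_smul] using mul_le_of_le_one_right (abs_nonneg (v i)) (hz1 (j + i))
  obtain ⟨q, hq⟩ := exists_seminorm_tendsto (hyperfilter ℕ) hp
  obtain ⟨E, iE, iE', iE'', T, hT⟩ := exists_completeSpace_linearMap_norm_eq q
  refine ⟨E, iE, iE', iE'', fun i => T (Finsupp.single i 1), fun n => 1 / ((n : ℝ) + 1),
    fun m n hmn => by simp only; gcongr, tendsto_one_div_add_atTop_nhds_zero_nat,
    fun n a ha k hk hnk => ?_⟩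
  have hlim := hq (∑ i ∈ Finset.range n, a i • Finsupp.single i 1)
  rw [← hT] at hlim
  simp only [p, Seminorm.comp_apply, coe_normSeminorm, map_sum, map_smul,
    Finsupp.linearCombination_single, one_smul] at hlim
  refine le_of_tendsto (tendsto_const_nhds.sub hlim).abs ?_
  filter_upwards [(eventually_ge_atTop n).filter_mono Nat.hyperfilter_le_atTop] with j hj
  rw [Finset.sum_range, Finset.sum_range]
  exact hz n (fun i => a i) (fun i => ha i i.2) k (fun i => j + i) hk (fun _ _ h => by lia)
    (fun i => hnk.trans (hk.monotone i.zero_le)) fun i => hj.trans (Nat.le_add_right j i)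

theorem exists_subseq_isSpreadingModel {y : ℕ → X} (hy : ∀ i, ‖y i‖ ≤ 1) :
    ∃ ψ : ℕ → ℕ, StrictMono ψ ∧ ∃ (E : Type) (_ : NormedAddCommGroup E) (_ : NormedSpace ℝ E)
      (_ : CompleteSpace E) (e : ℕ → E), IsSpreadingModel (fun i => y (ψ i)) e := by
  obtain ⟨ψ, hψ, hspread⟩ := exists_strictMono_isAsymptoticallySpreading hy
  exact ⟨ψ, hψ, hspread.exists_isSpreadingModel fun i => hy (ψ i)⟩

end SpreadingModels

/-! ### Pairs of successive vectors in weakly null block sequences -/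

section WeaklyNullBlocks

variable {X : Type} [NormedAddCommGroup X] [NormedSpace ℝ X] {x v : ℕ → X}

/-- `v` is a weakly null sequence of finite linear combinations of `x` with successive supports.
Unlike for block bases, the vectors `v j` may vanish. -/
structure IsWeaklyNullBlock (x v : ℕ → X) : Prop where
  supports : ∃ s, IsSuccessive s ∧ ∀ j, v j ∈ Submodule.span ℝ (x '' s j)
  weaklyNull : WeaklyNull v

theorem WeaklyNull.comp (h : WeaklyNull v) {φ : ℕ → ℕ} (hφ : StrictMono φ) :
    WeaklyNull fun j => v (φ j) :=
  fun f => (h f).comp hφ.tendsto_atTop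

namespace IsWeaklyNullBlock

theorem comp (h : IsWeaklyNullBlock x v) {φ : ℕ → ℕ} (hφ : StrictMono φ) :
    IsWeaklyNullBlock x fun j => v (φ j) where
  supports := h.supports.imp' (fun s j => s (φ j)) fun _ hs =>
    ⟨fun _ _ hij => hs.1 _ _ (hφ hij), fun j => hs.2 (φ j)⟩
  weaklyNull := h.weaklyNull.comp hφ

theorem smul (h : IsWeaklyNullBlock x v) {c : ℕ → ℝ} {C : ℝ} (hc : ∀ j, |c j| ≤ C) :
    IsWeaklyNullBlock x fun j => c j • v j where
  supports := h.supports.imp fun _ hs => ⟨hs.1, fun j => Submodule.smul_mem _ _ (hs.2 j)⟩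
  weaklyNull f := by
    simp only [map_smul, smul_eq_mul]
    exact isBoundedUnder_le_mul_tendsto_zero (isBoundedUnder_of ⟨C, hc⟩) (h.weaklyNull f)

theorem sub_pairs (h : IsWeaklyNullBlock x v) :
    IsWeaklyNullBlock x fun j => v (2 * j) - v (2 * j + 1) where
  supports := by
    classical
    obtain ⟨s, hs, hv⟩ := h.supports
    refine ⟨fun j => s (2 * j) ∪ s (2 * j + 1), fun i j hij a ha b hb => ?_, fun j => ?_⟩
    · rcases Finset.mem_union.1 ha with ha | ha <;> rcases Finset.mem_union.1 hb with hb | hb <;>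
        exact hs _ _ (by lia) a ha b hb
    · exact Submodule.sub_mem _
        (Submodule.span_mono (Set.image_mono (by simp)) (hv (2 * j)))
        (Submodule.span_mono (Set.image_mono (by simp)) (hv (2 * j + 1)))
  weaklyNull f := by
    have heven := h.weaklyNull.comp (φ := fun j => 2 * j) (fun _ _ _ => by simp only; lia) f
    have hodd := h.weaklyNull.comp (φ := fun j => 2 * j + 1) (fun _ _ _ => by simp only; lia) f
    simpa only [map_sub, sub_zero] using heven.sub hodd

theorem isBlockBasis (h : IsWeaklyNullBlock x v) (hv0 : ∀ j, v j ≠ 0) : IsBlockBasis x v := by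
  classical
  obtain ⟨s, hs, hv⟩ := h.supports
  have hne (j : ℕ) : (s j).Nonempty := by
    by_contra hempty
    have hvj := hv j
    rw [Finset.not_nonempty_iff_eq_empty.1 hempty] at hvj
    exact hv0 j (by simpa using hvj)
  simp only [Submodule.mem_span_image_finset_iff_exists_fun'] at hv
  choose c hc using hv
  refine ⟨fun j i => if i ∈ s j then c j i else 0, fun j => (s j).min' (hne j),
    fun j => (s j).max' (hne j), fun j => ?_, hv0, fun j => Finset.min'_le_max' _ _,
    fun j => hs j (j + 1) j.lt_succ_self _ (Finset.max'_mem _ _) _ (Finset.min'_mem _ _)⟩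
  have hsub : s j ⊆ Finset.Icc ((s j).min' (hne j)) ((s j).max' (hne j)) := fun i hi =>
    Finset.mem_Icc.2 ⟨Finset.min'_le _ _ hi, Finset.le_max' _ _ hi⟩
  simp only
  rw [← hc j, ← Finset.sum_subset hsub fun i _ hi => by rw [if_neg hi, zero_smul]]
  exact Finset.sum_congr rfl fun i hi => by rw [if_pos hi]

end IsWeaklyNullBlock

theorem WeaklyNull.exists_mem_convexHull_norm_le (h : WeaklyNull v) (m : ℕ) {η : ℝ} (hη : 0 < η) :
    ∃ K, ∃ z ∈ convexHull ℝ (v '' Set.Ico m K), ‖z‖ ≤ η := by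
  classical
  have hzero : (0 : X) ∈ closure (convexHull ℝ (v '' Set.Ici m)) := by
    by_contra hnot
    obtain ⟨f, r, hr, hf⟩ := geometric_hahn_banach_point_closed
      (convex_convexHull ℝ (v '' Set.Ici m)).closure isClosed_closure hnot
    rw [map_zero] at hr
    obtain ⟨n, hmn, hn⟩ := ((eventually_ge_atTop m).and ((h f).eventually_lt_const hr)).exists
    exact lt_asymm hn (hf (v n) (subset_closure (subset_convexHull ℝ _ ⟨n, hmn, rfl⟩)))
  obtain ⟨z, hz, hdist⟩ := Metric.mem_closure_iff.1 hzero η hη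
  rw [dist_zero_left] at hdist
  rw [convexHull_eq_union_convexHull_finite_subsets] at hz
  obtain ⟨t, ht, hzt⟩ := Set.mem_iUnion₂.1 hz
  obtain ⟨r, hr, rfl⟩ := Finset.subset_set_image_iff.1 ht
  refine ⟨r.sup id + 1, z, convexHull_mono ?_ hzt, hdist.le⟩
  rw [Finset.coe_image]
  exact Set.image_mono fun i hi => ⟨hr hi, Nat.lt_succ_of_le (Finset.le_sup (f := id) hi)⟩

theorem WeaklyNull.exists_norm_add_le (hv : WeaklyNull v) {C : ℝ}
    (hC : ∀ a b c d, a < b → b < c → c < d → ‖v a - v b - v c + v d‖ ≤ C) {η : ℝ} (hη : 0 < η) :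
    ∃ j k, j < k ∧ ‖v j + v k‖ ≤ C + η := by
  obtain ⟨K₁, z₁, hz₁, hz₁η⟩ := hv.exists_mem_convexHull_norm_le 1 (half_pos hη)
  obtain ⟨K₂, z₂, hz₂, hz₂η⟩ := hv.exists_mem_convexHull_norm_le (1 + K₁) (half_pos hη)
  let d := 1 + K₁ + K₂
  have hball₁ (c : ℕ) (hc : c ∈ Set.Ico (1 + K₁) K₂) :
      z₁ ∈ Metric.closedBall (v 0 - v c + v d) C := by
    refine convexHull_min ?_ (convex_closedBall _ _) hz₁
    rintro _ ⟨b, hb, rfl⟩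
    rw [Metric.mem_closedBall, dist_comm, dist_eq_norm]
    rw [show v 0 - v c + v d - v b = v 0 - v b - v c + v d by abel]
    exact hC 0 b c d hb.1 ((hb.2.trans_le (Nat.le_add_left _ _)).trans_le hc.1)
      (hc.2.trans_le (Nat.le_add_left _ _))
  have hball₂ : z₂ ∈ Metric.closedBall (v 0 - z₁ + v d) C := by
    refine convexHull_min ?_ (convex_closedBall _ _) hz₂
    rintro _ ⟨c, hc, rfl⟩
    have hz₁c := hball₁ c hc
    rw [Metric.mem_closedBall, dist_comm, dist_eq_norm] at hz₁c ⊢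
    rwa [show v 0 - z₁ + v d - v c = v 0 - v c + v d - z₁ by abel]
  rw [Metric.mem_closedBall, dist_comm, dist_eq_norm] at hball₂
  refine ⟨0, d, by lia, ?_⟩
  calc ‖v 0 + v d‖ = ‖(v 0 - z₁ + v d - z₂) + z₁ + z₂‖ := by congr 1; abel
    _ ≤ ‖v 0 - z₁ + v d - z₂‖ + ‖z₁‖ + ‖z₂‖ := norm_add₃_le
    _ ≤ C + η := by linarith

/-- Every spreading model of a normalized weakly null block basis of `x` satisfies
`‖e 0 - e 1‖ = 1`. -/
def SpreadingModelsNormSubEqOne (x : ℕ → X) : Prop :=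
  ∀ (E : Type) [NormedAddCommGroup E] [NormedSpace ℝ E] [CompleteSpace E],
    ∀ (y : ℕ → X) (e : ℕ → E), IsBlockBasis x y → (∀ j, ‖y j‖ = 1) → WeaklyNull y →
      IsSpreadingModel y e → ‖e 0 - e 1‖ = 1

theorem IsSpreadingModel.exists_abs_norm_sub_sub_le {E : Type} [NormedAddCommGroup E]
    [NormedSpace ℝ E] {e : ℕ → E} (h : IsSpreadingModel v e) {η : ℝ} (hη : 0 < η) :
    ∃ m, ∀ i j, m ≤ i → i < j → |‖v i - v j‖ - ‖e 0 - e 1‖| ≤ η := by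
  obtain ⟨ε, -, hε, h⟩ := h
  obtain ⟨m, hm, hεm⟩ := ((eventually_ge_atTop 2).and (hε.eventually_le_const hη)).exists
  obtain ⟨n, rfl⟩ := Nat.exists_eq_add_of_le' hm
  refine ⟨n + 2, fun i j hi hij => ?_⟩
  let a : ℕ → ℝ := fun | 0 => 1 | 1 => -1 | _ + 2 => 0
  let k : ℕ → ℕ := fun | 0 => i | l + 1 => j + l
  have ha : ∀ l < n + 2, |a l| ≤ 1 := by
    rintro (_ | _ | l) - <;> simp [a]
  have hk : StrictMono k := strictMono_nat_of_lt_succ (by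
    rintro (_ | l) <;> simp only [k] <;> lia)
  have hspread := h (n + 2) a ha k hk hi
  simp only [Finset.sum_range_succ', a, k, zero_smul, Finset.sum_const_zero, zero_add, one_smul,
    neg_smul, add_zero] at hspread
  rw [neg_add_eq_sub, neg_add_eq_sub] at hspread
  exact hspread.trans hεm

theorem norm_sub_inv_norm_smul {w : X} (hw : w ≠ 0) : ‖w - ‖w‖⁻¹ • w‖ = |‖w‖ - 1| := by
  have hw' : ‖w‖ ≠ 0 := norm_ne_zero_iff.2 hw
  calc ‖w - ‖w‖⁻¹ • w‖ = ‖(1 - ‖w‖⁻¹) • w‖ := by rw [sub_smul, one_smul]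
    _ = |(1 - ‖w‖⁻¹) * ‖w‖| := by rw [norm_smul, abs_mul, abs_norm, Real.norm_eq_abs]
    _ = |‖w‖ - 1| := by rw [sub_mul, one_mul, inv_mul_cancel₀ hw']

namespace SpreadingModelsNormSubEqOne

variable {η : ℝ}

theorem exists_strictMono_abs_norm_sub_sub_one_le (hx : SpreadingModelsNormSubEqOne x)
    (hv : IsWeaklyNullBlock x v) (hη : 0 < η) (hη2 : η ≤ 1 / 2) (hv1 : ∀ j, |‖v j‖ - 1| ≤ η) :
    ∃ φ : ℕ → ℕ, StrictMono φ ∧ ∀ i j, i < j → |‖v (φ i) - v (φ j)‖ - 1| ≤ 3 * η := by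
  have hhalf (j : ℕ) : 1 / 2 ≤ ‖v j‖ := by linarith [(abs_le.1 (hv1 j)).1]
  have hv0 (j : ℕ) : v j ≠ 0 := norm_pos_iff.1 (by linarith [hhalf j])
  let w (j : ℕ) : X := ‖v j‖⁻¹ • v j
  have hw1 (j : ℕ) : ‖w j‖ = 1 := by
    simp [w, norm_smul, inv_mul_cancel₀ (norm_ne_zero_iff.2 (hv0 j))]
  have hw : IsWeaklyNullBlock x w := hv.smul (C := 2) fun j => by
    rw [abs_inv, abs_norm]
    exact inv_le_of_inv_le₀ two_pos (by linarith [hhalf j])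
  obtain ⟨ψ, hψ, E, _, _, _, e, he⟩ := exists_subseq_isSpreadingModel fun j => (hw1 j).le
  have hwψ := hw.comp hψ
  have he1 : ‖e 0 - e 1‖ = 1 := hx E _ e
    (hwψ.isBlockBasis fun j => norm_pos_iff.1 (by rw [hw1]; exact one_pos)) (fun j => hw1 _)
    hwψ.weaklyNull he
  obtain ⟨m, hm⟩ := he.exists_abs_norm_sub_sub_le hη
  refine ⟨fun j => ψ (m + j), hψ.comp fun _ _ h => by lia, fun i j hij => ?_⟩
  have hwij := abs_le.1 (hm (m + i) (m + j) (Nat.le_add_right m i) (by lia))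
  rw [he1] at hwij
  have hvw (j : ℕ) : ‖v j - w j‖ ≤ η := (norm_sub_inv_norm_smul (hv0 j)).trans_le (hv1 j)
  have hdiff : |‖v (ψ (m + i)) - v (ψ (m + j))‖ - ‖w (ψ (m + i)) - w (ψ (m + j))‖| ≤ η + η := by
    refine (abs_norm_sub_norm_le _ _).trans ?_
    rw [sub_sub_sub_comm]
    exact norm_sub_le_of_le (hvw _) (hvw _)
  have := abs_le.1 hdiff
  rw [abs_le]
  constructor <;> linarith

theorem exists_strictMono_norm_le (hx : SpreadingModelsNormSubEqOne x)
    (hv : IsWeaklyNullBlock x v) (hη : 0 < η) (hη6 : η ≤ 1 / 6) (hv1 : ∀ j, |‖v j‖ - 1| ≤ η) :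
    ∃ φ : ℕ → ℕ, StrictMono φ ∧ ∀ a b c d, a < b → b < c → c < d →
      ‖v (φ a) - v (φ b) - v (φ c) + v (φ d)‖ ≤ 1 + 9 * η := by
  obtain ⟨φ, hφ, hsub⟩ :=
    hx.exists_strictMono_abs_norm_sub_sub_one_le hv hη (by linarith) hv1
  obtain ⟨N, -, hN, hbad | hgood⟩ := exists_infinite_homogeneous_tuple (n := 4)
    (p := fun k => ‖v (φ (k 0)) - v (φ (k 1)) - v (φ (k 2)) + v (φ (k 3))‖ ≤ 1 + 9 * η)
    (fun k k' hk => by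
      simp only [hk 0 (by simp), hk 1 (by simp), hk 2 (by simp), hk 3 (by simp)])
    Set.infinite_univ
  · exfalso
    have hν : StrictMono (Nat.nth (· ∈ N)) := Nat.nth_strictMono hN
    obtain ⟨χ, hχ, hd⟩ := hx.exists_strictMono_abs_norm_sub_sub_one_le
      ((hv.comp (hφ.comp hν)).sub_pairs) (by positivity) (show 3 * η ≤ 1 / 2 by linarith)
      fun j => hsub _ _ (hν (by lia))
    refine hbad (fun i => Nat.nth (· ∈ N) (2 * χ (i / 2) + i % 2)) (hν.comp fun i j hij => ?_)
      (fun i => Nat.nth_mem_of_infinite hN _) ?_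
    · rcases (Nat.div_le_div_right (c := 2) hij.le).eq_or_lt with heq | hlt
      · grind
      · have := hχ hlt
        grind
    · have hd01 := (abs_le.1 (hd 0 1 one_pos)).2
      rw [sub_le_iff_le_add'] at hd01
      rw [sub_add]
      exact hd01.trans_eq (by ring)
  · refine ⟨_, hφ.comp (Nat.nth_strictMono hN), fun a b c d hab hbc hcd => ?_⟩
    let k : ℕ → ℕ := fun | 0 => a | 1 => b | 2 => c | l + 3 => d + l
    have hk : StrictMono k := strictMono_nat_of_lt_succ (by
      rintro (_ | _ | _ | l) <;> simp only [k] <;> lia)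
    exact hgood _ ((Nat.nth_strictMono hN).comp hk) fun i => Nat.nth_mem_of_infinite hN _

theorem exists_norm_add_le_of_nearly_normalized (hx : SpreadingModelsNormSubEqOne x)
    (hv : IsWeaklyNullBlock x v) (hη : 0 < η) (hη6 : η ≤ 1 / 6) (hv1 : ∀ j, |‖v j‖ - 1| ≤ η) :
    ∃ j k, j < k ∧ ‖v j + v k‖ ≤ 1 + 10 * η := by
  obtain ⟨φ, hφ, hquad⟩ := hx.exists_strictMono_norm_le hv hη hη6 hv1
  obtain ⟨j, k, hjk, h⟩ := (hv.weaklyNull.comp hφ).exists_norm_add_le hquad hη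
  exact ⟨φ j, φ k, hφ hjk, h.trans (by linarith)⟩

theorem exists_norm_add_le (hx : SpreadingModelsNormSubEqOne x) (hv : IsWeaklyNullBlock x v)
    {c R : ℝ} (hc : 0 < c) (hcv : ∀ j, c ≤ ‖v j‖) (hvR : ∀ j, ‖v j‖ ≤ R) (hη : 0 < η) :
    ∃ j k, j < k ∧ ‖v j + v k‖ ≤ R + η := by
  obtain ⟨r, ⟨hcr, hrR⟩, φ, hφ, hlim⟩ := isCompact_Icc.tendsto_subseq
    (x := fun j => ‖v j‖) fun j => Set.mem_Icc.2 ⟨hcv j, hvR j⟩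
  have hr : 0 < r := hc.trans_le hcr
  have hlim1 : Tendsto (fun j => |‖r⁻¹ • v (φ j)‖ - 1|) atTop (𝓝 0) := by
    have := ((hlim.const_mul r⁻¹).sub_const 1).abs
    simpa [norm_smul, abs_of_pos hr, inv_mul_cancel₀ hr.ne'] using this
  obtain ⟨δ, hδ, hδ6, hδη⟩ : ∃ δ, 0 < δ ∧ δ ≤ 1 / 6 ∧ r * (10 * δ) ≤ η :=
    ⟨min (1 / 6) (η / (10 * r)), by positivity, min_le_left _ _, by
      have := min_le_right (1 / 6) (η / (10 * r))
      rw [le_div_iff₀ (by positivity)] at this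
      linarith⟩
  obtain ⟨m, hm⟩ := eventually_atTop.1 (hlim1.eventually_le_const hδ)
  have hshift : StrictMono fun j => φ (m + j) := hφ.comp fun _ _ h => by lia
  obtain ⟨j, k, hjk, hle⟩ := hx.exists_norm_add_le_of_nearly_normalized
    ((hv.comp hshift).smul (c := fun _ => r⁻¹) fun _ => le_rfl) hδ hδ6
    fun j => hm (m + j) (Nat.le_add_right m j)
  refine ⟨_, _, hshift hjk, ?_⟩
  rw [← smul_add, norm_smul, norm_inv, Real.norm_of_nonneg hr.le, inv_mul_le_iff₀ hr] at hle
  linarith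

end SpreadingModelsNormSubEqOne

end WeaklyNullBlocks

/-! ### Stacking maximal blocks -/

section InitialSums

variable {X : Type*} [SeminormedAddCommGroup X] {x : ℕ → X} {C : ℝ} {L N : Set ℕ}
  {s t u w : Finset ℕ}

/-- Every initial segment of `s` indexes a sum of norm at most `C`. -/
def InitSumsLE (x : ℕ → X) (C : ℝ) (s : Finset ℕ) : Prop :=
  ∀ u, IsInitSeg u (↑s : Set ℕ) → ‖∑ i ∈ u, x i‖ ≤ C

theorem InitSumsLE.norm_le (h : InitSumsLE x C s) : ‖∑ i ∈ s, x i‖ ≤ C :=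
  h s (IsInitSeg.refl s)

theorem InitSumsLE.of_isInitSeg (ht : InitSumsLE x C t) (h : IsInitSeg s ↑t) : InitSumsLE x C s :=
  fun u hu => ht u (hu.trans h)

theorem initSumsLE_empty (hC : 0 ≤ C) : InitSumsLE x C ∅ := fun u hu => by
  have hu0 : u = ∅ := Finset.subset_empty.1 (by exact_mod_cast hu.1)
  simpa only [hu0, Finset.sum_empty, norm_zero] using hC

theorem InitSumsLE.insert {a : ℕ} (hu : InitSumsLE x C u) (h : ∀ b ∈ u, b < a)
    (hC : ‖∑ i ∈ insert a u, x i‖ ≤ C) : InitSumsLE x C (insert a u) := fun v hv => by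
  rcases hv.eq_insert_or h with rfl | hv
  exacts [hC, hu v hv]

/-- The nonempty `u ⊆ N` with `InitSumsLE x C u` that cease to be so bounded whichever later
element of `N` is added to them. -/
def maximalBlocks (x : ℕ → X) (C : ℝ) (N : Set ℕ) : Set (Finset ℕ) :=
  {u | u.Nonempty ∧ ↑u ⊆ N ∧ InitSumsLE x C u ∧ ∀ a ∈ tailAbove N u, C < ‖∑ i ∈ insert a u, x i‖}

theorem eq_of_mem_maximalBlocks_of_isInitSeg (hs : s ∈ maximalBlocks x C N) (hw : InitSumsLE x C w)
    (hwN : ↑w ⊆ N) (h : IsInitSeg s ↑w) : s = w := by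
  by_contra hne
  obtain ⟨a, haw, hsa, ha⟩ := h.exists_insert fun hws =>
    hne (Finset.Subset.antisymm (by exact_mod_cast h.1) (by exact_mod_cast hws))
  exact (hs.2.2.2 a ⟨hwN haw, hsa⟩).not_ge (hw _ ha)

theorem isThin_maximalBlocks (x : ℕ → X) (C : ℝ) (N : Set ℕ) : IsThin (maximalBlocks x C N) :=
  ⟨fun _ hs => hs.1, fun _ hs _ ht => eq_of_mem_maximalBlocks_of_isInitSeg hs ht.2.2.1 ht.2.1⟩

theorem isFront_maximalBlocks (hx : ∀ i, ‖x i‖ ≤ C)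
    (hdich : ∀ u : Finset ℕ, ↑u ⊆ N → (∀ a ∈ tailAbove N u, ‖∑ i ∈ insert a u, x i‖ ≤ C) ∨
      ∀ a ∈ tailAbove N u, ¬ ‖∑ i ∈ insert a u, x i‖ ≤ C)
    (hlarge : ∀ P ⊆ N, P.Infinite → ∃ s, C < ‖∑ i ∈ s, x i‖ ∧ IsInitSeg s P) :
    IsFront (maximalBlocks x C N) N := by
  intro P hPN hP
  by_contra! hnot
  have hbdd (s : Finset ℕ) : IsInitSeg s P → InitSumsLE x C s := by
    induction s using Finset.induction_on_max with
    | empty => exact fun _ => initSumsLE_empty ((norm_nonneg _).trans (hx 0))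
    | insert a u hua ih =>
      intro hau
      have hu : IsInitSeg u P := (isInitSeg_insert hua).trans hau
      refine (ih hu).insert hua ?_
      rcases u.eq_empty_or_nonempty with rfl | hne
      · simpa using hx a
      have ha : a ∈ tailAbove N u := ⟨hPN (hau.1 (Finset.mem_insert_self a u)), hua⟩
      have huN : ↑u ⊆ N := hu.1.trans hPN
      refine (hdich u huN).elim (fun h => h a ha) fun h => ?_
      exact absurd hu (hnot u ⟨hne, huN, ih hu, fun b hb => not_le.1 (h b hb)⟩)
  obtain ⟨s, hs, hsP⟩ := hlarge P hPN hP
  exact hs.not_ge (hbdd s hsP).norm_le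

theorem IsFront.exists_mem_maximalBlocks_isInitSeg (hfront : IsFront (maximalBlocks x C N) L)
    (hL : L.Infinite) (hLN : L ⊆ N) (hw : InitSumsLE x C w) (hwL : ↑w ⊆ L) :
    ∃ t ∈ maximalBlocks x C N, IsInitSeg w ↑t ∧ ↑t ⊆ L := by
  have hPL : ↑w ∪ tailAbove L w ⊆ L := Set.union_subset hwL (tailAbove_subset L w)
  obtain ⟨t, ht, htP⟩ := hfront _ hPL ((infinite_tailAbove hL w).mono Set.subset_union_right)
  have hwP : IsInitSeg w (↑w ∪ tailAbove L w) := isInitSeg_union_of_lt fun b hb a ha => ha.2 b hb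
  refine ⟨t, ht, ?_, htP.1.trans hPL⟩
  rcases htP.total hwP with htw | hwt
  · rw [eq_of_mem_maximalBlocks_of_isInitSeg ht hw (hwL.trans hLN) htw]
    exact IsInitSeg.refl w
  · exact hwt

/-- Every infinite `P ⊆ N` starts with a block that can be put in front of any later subset of `N`
at the cost of increasing the bound on its initial sums from `C` to `C'`. -/
def BlockExtends (x : ℕ → X) (C C' : ℝ) (N : Set ℕ) : Prop :=
  ∀ P ⊆ N, P.Infinite → ∃ s : Finset ℕ, s.Nonempty ∧ IsInitSeg s P ∧
    ∀ w : Finset ℕ, ↑w ⊆ tailAbove N s → InitSumsLE x C w → InitSumsLE x C' (s ∪ w)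

theorem blockExtends_antitone (x : ℕ → X) (C C' : ℝ) : Antitone (BlockExtends x C C') := by
  intro L N hLN hN P hPL hP
  obtain ⟨s, hs, hsP, hext⟩ := hN P (hPL.trans hLN) hP
  exact ⟨s, hs, hsP, fun w hw => hext w (hw.trans (tailAbove_mono hLN s))⟩

theorem initSumsLE_of_forall_blockExtends {C : ℕ → ℝ} (hC : ∀ n, 0 ≤ C n) (hN : N.Infinite)
    (h : ∀ u : Finset ℕ, ↑u ⊆ N → BlockExtends x (C (#u + 1)) (C #u) (tailAbove N u))
    (u w : Finset ℕ) (hu : ↑u ⊆ N) (hw : ↑w ⊆ tailAbove N u) : InitSumsLE x (C #u) w := by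
  classical
  induction hn : #w using Nat.strong_induction_on generalizing u w with
  | _ n ih =>
  obtain ⟨s, ⟨m, hm⟩, hsP, hext⟩ := h u hu (↑w ∪ tailAbove (tailAbove N u) w)
    (Set.union_subset hw (tailAbove_subset _ _))
    ((infinite_tailAbove (infinite_tailAbove hN u) w).mono Set.subset_union_right)
  have hwP : IsInitSeg w (↑w ∪ tailAbove (tailAbove N u) w) :=
    isInitSeg_union_of_lt fun b hb a ha => ha.2 b hb
  rcases hwP.total hsP with hws | hsw
  · have hs : InitSumsLE x (C #u) (s ∪ ∅) := hext ∅ (by simp) (initSumsLE_empty (hC _))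
    rw [Finset.union_empty] at hs
    exact hs.of_isInitSeg hws
  have hsw' : s ⊆ w := by exact_mod_cast hsw.1
  have hmN : m ∈ tailAbove N u := hw (hsw.1 hm)
  have hlt : ∀ a ∈ s, ∀ b ∈ w \ s, a < b := fun a ha b hb => by
    obtain ⟨hbw, hbs⟩ := Finset.mem_sdiff.1 hb
    exact lt_of_not_ge fun hba => hbs (hsw.2 b hbw a ha hba)
  have hrest : ↑(w \ s) ⊆ tailAbove (tailAbove N u) s := fun b hb =>
    ⟨hw (Finset.mem_sdiff.1 hb).1, fun a ha => hlt a ha b hb⟩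
  have hrest' : ↑(w \ s) ⊆ tailAbove N (insert m u) := fun b hb =>
    ⟨(hrest hb).1.1, Finset.forall_mem_insert .. |>.2 ⟨hlt m hm b hb, (hrest hb).1.2⟩⟩
  have hcard : #(w \ s) < n := hn ▸ Finset.card_lt_card (Finset.sdiff_ssubset hsw' ⟨m, hm⟩)
  have hbound := ih _ hcard (insert m u) (w \ s) (insert_subset_of_mem_tailAbove hu hmN) hrest' rfl
  rw [Finset.card_insert_of_notMem fun hmu => (hmN.2 m hmu).false] at hbound
  have hunion := hext (w \ s) hrest hbound
  rwa [Finset.union_sdiff_of_subset hsw'] at hunion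

end InitialSums

section Stacking

variable {X : Type} [NormedAddCommGroup X] [NormedSpace ℝ X] {x : ℕ → X} {c C C' R R' δ : ℝ}
  {L M N : Set ℕ} {t u : Finset ℕ}

theorem IsAlmostMonotone.norm_sum_le (hN : IsAlmostMonotone x δ N) (ht : ↑t ⊆ N)
    (hu : IsInitSeg u ↑t) : ‖∑ i ∈ u, x i‖ ≤ ‖∑ i ∈ t, x i‖ + δ := by
  simpa only [one_smul] using hN t ht u hu (fun _ => 1) fun _ _ => abs_one.le

theorem IsAlmostMonotone.initSumsLE (hN : IsAlmostMonotone x δ N) (ht : ↑t ⊆ N)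
    (hC : ‖∑ i ∈ t, x i‖ ≤ C) : InitSumsLE x (C + δ) t :=
  fun _ hu => (hN.norm_sum_le ht hu).trans (by gcongr)

theorem IsAlmostMonotone.sub_le_norm_sum (hN : IsAlmostMonotone x δ N) (hc : ∀ i, c ≤ ‖x i‖)
    (ht : ↑t ⊆ N) (hne : t.Nonempty) : c - δ ≤ ‖∑ i ∈ t, x i‖ := by
  obtain ⟨a, -, -, ha⟩ := (isInitSeg_empty (t : Set ℕ)).exists_insert (by simpa using hne.ne_empty)
  have h := hN.norm_sum_le ht ha
  rw [insert_empty_eq, Finset.sum_singleton] at h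
  linarith [hc a]

theorem IsBlockSeq.isWeaklyNullBlock {B : Set (Finset ℕ)} {t : ℕ → Finset ℕ}
    (ht : IsBlockSeq B N t) (h : WeaklyNull fun j => ∑ i ∈ t j, x i) :
    IsWeaklyNullBlock x fun j => ∑ i ∈ t j, x i where
  supports := ⟨t, ht.1, fun _ => Submodule.sum_mem _ fun _ hi =>
    Submodule.subset_span (Set.mem_image_of_mem x hi)⟩
  weaklyNull := h

theorem IsThin.exists_infinite_norm_add_le [CompleteSpace X] {B : Set (Finset ℕ)} (hB : IsThin B)
    (hx : WeaklyNull x) (hl1 : ¬ Embeds ellOne X) (hsm : SpreadingModelsNormSubEqOne x)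
    (hfront : IsFront B M) (hM : M.Infinite) (hc : 0 < c) (hcB : ∀ s ∈ B, c ≤ ‖∑ i ∈ s, x i‖)
    (hR : ∀ s ∈ B, ‖∑ i ∈ s, x i‖ ≤ R) (hδ : 0 < δ) :
    ∃ N ⊆ M, N.Infinite ∧ ∀ s t, s ∈ B → t ∈ B → ↑s ⊆ N → ↑t ⊆ tailAbove N s →
      ‖∑ i ∈ s, x i + ∑ i ∈ t, x i‖ ≤ R + δ := by
  obtain ⟨L, hLM, hL, hnull⟩ := hB.exists_infinite_weaklyNull hl1 hx hM hfront hR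
  obtain ⟨N, hNL, hN, hbad | hgood⟩ := hB.exists_infinite_homogeneous_pair (hfront.mono hLM)
    (fun s t => ‖∑ i ∈ s, x i + ∑ i ∈ t, x i‖ ≤ R + δ) hL
  · exfalso
    obtain ⟨t, ht⟩ := (hfront.mono (hNL.trans hLM)).exists_isBlockSeq hN
    obtain ⟨j, k, hjk, hle⟩ := hsm.exists_norm_add_le
      (ht.isWeaklyNullBlock (hnull t (ht.mono hNL))) hc (fun i => hcB _ (ht.2 i).1)
      (fun i => hR _ (ht.2 i).1) hδ
    let φ : ℕ → ℕ := fun | 0 => j | i + 1 => k + i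
    have hφ : StrictMono φ := strictMono_nat_of_lt_succ (by
      rintro (_ | i) <;> simp only [φ] <;> lia)
    exact hbad (t ∘ φ) ⟨fun _ _ h => ht.1 _ _ (hφ h), fun i => ht.2 _⟩ hle
  · exact ⟨N, hNL.trans hLM, hN, hgood⟩

theorem IsAlmostMonotone.blockExtends (hN : IsAlmostMonotone x δ N) (hLN : L ⊆ N)
    (hL : L.Infinite) (hfront : IsFront (maximalBlocks x C N) L)
    (hpair : ∀ s t, s ∈ maximalBlocks x C N → t ∈ maximalBlocks x C N → ↑s ⊆ L →
      ↑t ⊆ tailAbove L s → ‖∑ i ∈ s, x i + ∑ i ∈ t, x i‖ ≤ C') :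
    BlockExtends x C (C' + δ) L := by
  classical
  intro P hPL hP
  obtain ⟨s, hs, hsP⟩ := hfront P hPL hP
  have hsL : ↑s ⊆ L := hsP.1.trans hPL
  refine ⟨s, hs.1, hsP, fun w hw hwC => ?_⟩
  have hLs : tailAbove L s ⊆ N := (tailAbove_subset L s).trans hLN
  obtain ⟨t, ht, hwt, htL⟩ :=
    (hfront.mono (tailAbove_subset L s)).exists_mem_maximalBlocks_isInitSeg
      (infinite_tailAbove hL s) hLs hwC hw
  have hst : ∀ a ∈ s, ∀ b ∈ t, a < b := fun a ha b hb => (htL hb).2 a ha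
  have hdisj : Disjoint s t := Finset.disjoint_left.2 fun a ha hat => (hst a ha a hat).false
  have hstN : (↑(s ∪ t) : Set ℕ) ⊆ N := by
    rw [Finset.coe_union]
    exact Set.union_subset (hsL.trans hLN) (htL.trans hLs)
  refine (hN.initSumsLE hstN ?_).of_isInitSeg (hwt.union_left hst)
  rw [Finset.sum_union hdisj]
  exact hpair s t hs ht hsL htL

theorem SpreadingModelsNormSubEqOne.exists_infinite_blockExtends [CompleteSpace X]
    (hsm : SpreadingModelsNormSubEqOne x) (hnorm : ∀ i, ‖x i‖ = 1) (hx : WeaklyNull x)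
    (hl1 : ¬ Embeds ellOne X) (hR : 1 ≤ R) (hRR' : R < R') (hR' : R' ≤ 2) (hM : M.Infinite)
    (hlarge : ∀ P ⊆ M, P.Infinite → ∃ s, R < ‖∑ i ∈ s, x i‖ ∧ IsInitSeg s P) :
    ∃ N ⊆ M, N.Infinite ∧ BlockExtends x R R' N := by
  obtain ⟨δ, hδ, hδR⟩ : ∃ δ > 0, R + δ + δ = R' := ⟨(R' - R) / 2, by linarith, by ring⟩
  obtain ⟨K, hKM, hK, hKmono⟩ := hx.exists_infinite_isAlmostMonotone hM hδ
  obtain ⟨L, hLK, hL, hdich⟩ :=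
    exists_infinite_homogeneous_insert (fun s => ‖∑ i ∈ s, x i‖ ≤ R) hK
  have hLmono : IsAlmostMonotone x δ L := isAlmostMonotone_antitone x δ hLK hKmono
  have hfront : IsFront (maximalBlocks x R L) L :=
    isFront_maximalBlocks (fun i => (hnorm i).trans_le hR) hdich
      fun P hP => hlarge P (hP.trans (hLK.trans hKM))
  obtain ⟨N, hNL, hN, hpair⟩ := (isThin_maximalBlocks x R L).exists_infinite_norm_add_le hx hl1 hsm
    hfront hL (show 0 < 1 - δ by linarith)
    (fun s hs => hLmono.sub_le_norm_sum (fun i => (hnorm i).ge) hs.2.1 hs.1)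
    (fun s hs => hs.2.2.1.norm_le) hδ
  refine ⟨N, hNL.trans (hLK.trans hKM), hN, ?_⟩
  rw [← hδR]
  exact hLmono.blockExtends hNL hN (hfront.mono hNL) hpair

theorem SpreadingModelsNormSubEqOne.exists_infinite_norm_sum_le_two [CompleteSpace X]
    (hsm : SpreadingModelsNormSubEqOne x) (hnorm : ∀ i, ‖x i‖ = 1) (hx : WeaklyNull x)
    (hl1 : ¬ Embeds ellOne X) :
    ∃ M : Set ℕ, M.Infinite ∧ ∀ s : Finset ℕ, ↑s ⊆ M → ‖∑ i ∈ s, x i‖ ≤ 2 := by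
  obtain ⟨M, -, hM, hsmall | hlarge⟩ := exists_infinite_forall_notMem_or_exists_isInitSeg
    {s | 2 < ‖∑ i ∈ s, x i‖} Set.infinite_univ
  · exact ⟨M, hM, fun s hs => not_lt.1 (hsmall s hs)⟩
  exfalso
  let C : ℕ → ℝ := fun n => 1 + 1 / (n + 1)
  have hC1 (n : ℕ) : 1 ≤ C n := le_add_of_nonneg_right Nat.one_div_pos_of_nat.le
  have hCanti : StrictAnti C := strictAnti_nat_of_succ_lt fun n =>
    add_lt_add_right (Nat.one_div_lt_one_div n.lt_succ_self) 1
  have hC0 : C 0 = 2 := by norm_num [C]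
  have hC2 (n : ℕ) : C n ≤ 2 := hC0 ▸ hCanti.antitone n.zero_le
  obtain ⟨N, hNM, hN, hext⟩ := exists_fusion
    (D := fun u L => BlockExtends x (C (#u + 1)) (C #u) L)
    (fun u => blockExtends_antitone x _ _) hM fun u _ L hLM hL =>
      hsm.exists_infinite_blockExtends hnorm hx hl1 (hC1 _) (hCanti (#u).lt_succ_self) (hC2 _) hL
        fun P hP hPinf => (hlarge P (hP.trans hLM) hPinf).imp fun s hs =>
          ⟨(hC2 _).trans_lt hs.1, hs.2⟩
  obtain ⟨s, hs, hsN⟩ := hlarge N hNM hN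
  have hle := (initSumsLE_of_forall_blockExtends (fun n => zero_le_one.trans (hC1 n)) hN hext ∅ s
    (by simp) (by simpa using hsN.1)).norm_le
  rw [Finset.card_empty, hC0] at hle
  exact hle.not_gt hs

end Stacking

/-! ### Equivalence with the unit vector basis of `c₀` -/

section EquivC0Basis

theorem sum_abs_le_of_forall_abs_sum_le {ι : Type*} {r : ι → ℝ} {s : Finset ι} {C : ℝ}
    (h : ∀ t ⊆ s, |∑ i ∈ t, r i| ≤ C) : ∑ i ∈ s, |r i| ≤ 2 * C := by
  have hpos : ∑ i ∈ s with 0 ≤ r i, |r i| ≤ C := by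
    rw [Finset.sum_congr rfl fun i hi => abs_of_nonneg (Finset.mem_filter.1 hi).2]
    exact (le_abs_self _).trans (h _ (Finset.filter_subset _ _))
  have hneg : ∑ i ∈ s with ¬ 0 ≤ r i, |r i| ≤ C := by
    rw [Finset.sum_congr rfl fun i hi => abs_of_neg (not_le.1 (Finset.mem_filter.1 hi).2),
      Finset.sum_neg_distrib]
    exact (neg_le_abs _).trans (h _ (Finset.filter_subset _ _))
  rw [← Finset.sum_filter_add_sum_filter_not s fun i => 0 ≤ r i]
  linarith

theorem norm_sum_smul_le_of_forall_norm_sum_le {ι X : Type*} [NormedAddCommGroup X]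
    [NormedSpace ℝ X] {v : ι → X} {s : Finset ι} {a : ι → ℝ} {A C : ℝ}
    (hC : ∀ t ⊆ s, ‖∑ i ∈ t, v i‖ ≤ C) (hA : 0 ≤ A) (ha : ∀ i ∈ s, |a i| ≤ A) :
    ‖∑ i ∈ s, a i • v i‖ ≤ 2 * C * A := by
  obtain ⟨f, hf, hfv⟩ := exists_norm_le_one_apply_eq_norm (∑ i ∈ s, a i • v i)
  have hfC : ∑ i ∈ s, |f (v i)| ≤ 2 * C := sum_abs_le_of_forall_abs_sum_le fun t ht => by
    rw [← map_sum]
    exact (abs_apply_le_norm hf _).trans (hC t ht)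
  calc ‖∑ i ∈ s, a i • v i‖ = ∑ i ∈ s, a i * f (v i) := by
        rw [← hfv, map_sum]
        simp only [map_smul, smul_eq_mul]
    _ ≤ ∑ i ∈ s, |f (v i)| * A := Finset.sum_le_sum fun i hi => by
        refine (le_abs_self _).trans ?_
        rw [abs_mul, mul_comm]
        exact mul_le_mul_of_nonneg_left (ha i hi) (abs_nonneg _)
    _ = (∑ i ∈ s, |f (v i)|) * A := (Finset.sum_mul _ _ _).symm
    _ ≤ 2 * C * A := mul_le_mul_of_nonneg_right hfC hA

variable {X : Type} [NormedAddCommGroup X] [NormedSpace ℝ X] {x : ℕ → X} {δ : ℝ} {N : Set ℕ}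
  {t u : Finset ℕ}

theorem IsAlmostMonotone.norm_sum_smul_le (hN : IsAlmostMonotone x δ N) (ht : ↑t ⊆ N)
    (hu : IsInitSeg u ↑t) {a : ℕ → ℝ} {A : ℝ} (hA : 0 < A) (ha : ∀ i ∈ t, |a i| ≤ A) :
    ‖∑ i ∈ u, a i • x i‖ ≤ ‖∑ i ∈ t, a i • x i‖ + δ * A := by
  have h := hN t ht u hu (fun i => A⁻¹ * a i) fun i hi => by
    rw [abs_mul, abs_inv, abs_of_pos hA, inv_mul_le_iff₀ hA, mul_one]
    exact ha i hi
  simp only [mul_smul, ← Finset.smul_sum, norm_smul, norm_inv, Real.norm_of_nonneg hA.le] at h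
  rw [inv_mul_le_iff₀ hA, mul_add, mul_inv_cancel_left₀ hA.ne'] at h
  linarith

theorem IsAlmostMonotone.norm_smul_le (hN : IsAlmostMonotone x δ N) (ht : ↑t ⊆ N) {a : ℕ → ℝ}
    {A : ℝ} (hA : 0 < A) (ha : ∀ i ∈ t, |a i| ≤ A) {j : ℕ} (hj : j ∈ t) :
    ‖a j • x j‖ ≤ 2 * (‖∑ i ∈ t, a i • x i‖ + δ * A) := by
  have hinit {k : ℕ} : IsInitSeg (t.filter (· < k)) ↑t :=
    ⟨by exact_mod_cast Finset.filter_subset _ t, fun b hb c hc hbc =>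
      Finset.mem_filter.2 ⟨hb, hbc.trans_lt (Finset.mem_filter.1 hc).2⟩⟩
  have hsplit : t.filter (· < j + 1) = insert j (t.filter (· < j)) := by
    ext i
    simp only [Finset.mem_filter, Finset.mem_insert]
    grind
  have hdiff : a j • x j =
      ∑ i ∈ t with i < j + 1, a i • x i - ∑ i ∈ t with i < j, a i • x i := by
    rw [hsplit, Finset.sum_insert (by simp), add_sub_cancel_right]
  rw [hdiff, two_mul]
  exact (norm_sub_le _ _).trans
    (add_le_add (hN.norm_sum_smul_le ht hinit hA ha) (hN.norm_sum_smul_le ht hinit hA ha))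

theorem IsAlmostMonotone.sup_le (hN : IsAlmostMonotone x δ N) (hnorm : ∀ i, ‖x i‖ = 1)
    (ht : ↑t ⊆ N) (a : ℕ → ℝ) :
    ((t.sup fun i => ‖a i‖₊ : ℝ≥0) : ℝ) ≤
      2 * (‖∑ i ∈ t, a i • x i‖ + δ * (t.sup fun i => ‖a i‖₊ : ℝ≥0)) := by
  rcases (t.sup fun i => ‖a i‖₊).coe_nonneg.eq_or_lt with hA | hA
  · rw [← hA, mul_zero, add_zero]
    positivity
  have hne : t.Nonempty := Finset.nonempty_iff_ne_empty.2 fun h => by simp [h] at hA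
  obtain ⟨j, hj, hjA⟩ := t.exists_mem_eq_sup hne fun i => ‖a i‖₊
  have ha : ∀ i ∈ t, |a i| ≤ (t.sup fun i => ‖a i‖₊ : ℝ≥0) := fun i hi => by
    exact_mod_cast Finset.le_sup (f := fun i => ‖a i‖₊) hi
  have hle := hN.norm_smul_le ht hA ha hj
  rw [norm_smul, hnorm, mul_one] at hle
  refine le_trans (le_of_eq ?_) hle
  rw [hjA, coe_nnnorm]

theorem IsAlmostMonotone.equivC0Basis (hN : IsAlmostMonotone x (1 / 4) N)
    (hnorm : ∀ i, ‖x i‖ = 1) (hsum : ∀ s : Finset ℕ, ↑s ⊆ N → ‖∑ i ∈ s, x i‖ ≤ 2) {q : ℕ → ℕ}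
    (hq : Function.Injective q) (hqN : ∀ i, q i ∈ N) : EquivC0Basis fun i => x (q i) := by
  let q' : ℕ ↪ ℕ := ⟨q, hq⟩
  have hrange (s : Finset ℕ) : ↑(s.map q') ⊆ N := by
    rw [Finset.coe_map]
    rintro _ ⟨i, -, rfl⟩
    exact hqN i
  refine ⟨4, by norm_num, fun k a => ⟨?_, ?_⟩⟩
  · have hext : ∀ i, Function.extend q a 0 (q i) = a i := hq.extend_apply a 0
    have hle := hN.sup_le hnorm (hrange (Finset.range k)) (Function.extend q a 0)
    simp only [Finset.sup_map, Finset.sum_map, Function.comp_def, q', Function.Embedding.coeFn_mk,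
      hext] at hle
    linarith
  · refine (norm_sum_smul_le_of_forall_norm_sum_le (C := 2)
      (A := ((Finset.range k).sup fun i => ‖a i‖₊ : ℝ≥0)) (fun t _ => ?_) (NNReal.coe_nonneg _)
      fun i hi => ?_).trans_eq (by norm_num)
    · have hle := hsum _ (hrange t)
      rwa [Finset.sum_map] at hle
    · exact_mod_cast Finset.le_sup (f := fun i => ‖a i‖₊) hi

end EquivC0Basis

theorem c0_spreading_models_general
    {X : Type} [NormedAddCommGroup X] [NormedSpace ℝ X] [CompleteSpace X]
    (x : ℕ → X) (hnorm : ∀ i, ‖x i‖ = 1) (hwn : WeaklyNull x) (hl1 : ¬ Embeds ellOne X)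
    (hsm : ∀ (E : Type) [NormedAddCommGroup E] [NormedSpace ℝ E] [CompleteSpace E],
      ∀ (y : ℕ → X) (e : ℕ → E), IsBlockBasis x y → (∀ j, ‖y j‖ = 1) → WeaklyNull y →
        IsSpreadingModel y e → ‖e 0 - e 1‖ = 1) :
    ∃ M : ℕ → ℕ, StrictMono M ∧ EquivC0Basis (fun i => x (M i)) := by
  obtain ⟨M, hM, hsum⟩ :=
    SpreadingModelsNormSubEqOne.exists_infinite_norm_sum_le_two hsm hnorm hwn hl1
  obtain ⟨N, hNM, hN, hmono⟩ := hwn.exists_infinite_isAlmostMonotone hM (δ := 1 / 4) (by norm_num)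
  exact ⟨Nat.nth (· ∈ N), Nat.nth_strictMono hN, hmono.equivC0Basis hnorm
    (fun s hs => hsum s (hs.trans hNM)) (Nat.nth_strictMono hN).injective
    (Nat.nth_mem_of_infinite hN)⟩

theorem c0_spreading_models
    {X : Type} [NormedAddCommGroup X] [NormedSpace ℝ X] [CompleteSpace X]
    (x : ℕ → X) (hbasis : IsSchauderBasis x) (hnorm : ∀ i, ‖x i‖ = 1)
    (hwn : WeaklyNull x) (hl1 : ¬ Embeds ellOne X)
    (hsm : ∀ (E : Type) [NormedAddCommGroup E] [NormedSpace ℝ E] [CompleteSpace E],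
      ∀ (y : ℕ → X) (e : ℕ → E), IsBlockBasis x y → (∀ j, ‖y j‖ = 1) → WeaklyNull y →
        IsSpreadingModel y e → ‖e 0 - e 1‖ = 1) :
    ∃ M : ℕ → ℕ, StrictMono M ∧ EquivC0Basis (fun i => x (M i)) :=
  c0_spreading_models_general x hnorm hwn hl1 hsm
end

section
/- (Elton–Odell) Let X be an infinite-dimensional Banach space. Then there exist λ > 1 and an infinite sequence (x_i) in the unit sphere of X such that ‖x_i − x_j‖ ≥ λ for all i ≠ j. -/
open Filter Finset Topology NormedSpace
open scoped NNReal

/-!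
An ultrafilter `p` on `X` is studied through the asymptotic behaviour of `‖y + w‖` as `w` runs
along `p`. Adding ultrafilters, the ones which asymptotically do not decrease norms and are
asymptotically of norm at least one form a compact right topological semigroup `S`; those of norm
exactly one form a closed subset `K`, nonempty since finitely many functionals have a common zero
on the sphere.

Suppose that no `λ > 1` works. Ramsey's argument along `p ∈ K` shows that `w - v` has norm at most
one asymptotically, that is `-p + p ∈ K`. So `S + p` meets `K` for every `p ∈ K`, and compactness
with Zorn's lemma gives an idempotent `e ∈ S` such that `e + p = p` for some `p ∈ K`, which forces
`e ∈ K`.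

Choose successively `w₀, w₁, …` typical for `e`, with partial sums `uₙ = w₀ + ⋯ + wₙ`. As
`e + e = e`, every `uₙ` is typical, hence `zₙ = uₙ₋₁ - wₙ` has norm about one. For `m < n` the
vector `zₘ - zₙ` arises from `zₘ - uₘ = -2 wₘ` by adding later vectors `±wₖ`, so that its norm is
at least about two: a contradiction.
-/

attribute [local instance] Ultrafilter.add Ultrafilter.semigroup Ultrafilter.addSemigroup

section Semigroup

variable {M : Type*} [Semigroup M]

@[to_additive]
theorem exists_mul_eq_self_of_isCompact [TopologicalSpace M] [T2Space M]
    (hcont : ∀ r : M, Continuous (· * r)) {S K : Set M} (hS : IsCompact S)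
    (hSmul : ∀ a ∈ S, ∀ b ∈ S, a * b ∈ S) (hK : IsCompact K) (hKne : K.Nonempty)
    (hSK : ∀ p ∈ K, ∃ q ∈ S, q * p ∈ K) : ∃ p ∈ K, ∃ q ∈ S, q * p = p := by
  let orbit : M → Set M := fun p => (· * p) '' S ∩ K
  have orbit_compact (p : M) : IsCompact (orbit p) := (hS.image (hcont p)).inter hK
  have orbit_subset {a b : M} (h : b ∈ orbit a) : orbit b ⊆ orbit a := by
    rintro _ ⟨⟨r, hr, rfl⟩, hrK⟩
    obtain ⟨⟨q, hq, rfl⟩, -⟩ := h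
    exact ⟨⟨r * q, hSmul r hr q hq, mul_assoc r q a⟩, hrK⟩
  have orbit_nonempty : ∀ p ∈ K, (orbit p).Nonempty := fun p hp =>
    let ⟨q, hq, hqp⟩ := hSK p hp
    ⟨q * p, ⟨q, hq, rfl⟩, hqp⟩
  obtain ⟨m, hm⟩ : ∃ m : K, ∀ a : K, (a : M) ∈ orbit m → (m : M) ∈ orbit a := by
    refine exists_maximal_of_chains_bounded (fun c hc => ?_) fun hab hbc => orbit_subset hab hbc
    rcases c.eq_empty_or_nonempty with rfl | hne
    · exact ⟨⟨_, hKne.some_mem⟩, fun a ha => ha.elim⟩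
    have : Nonempty c := hne.to_subtype
    have directed : Directed (· ⊇ ·) fun a : c => orbit (a : K) := by
      intro a b
      rcases eq_or_ne (a : K) b with hab | hab
      · exact ⟨a, subset_rfl, Subtype.ext hab ▸ subset_rfl⟩
      · rcases hc a.2 b.2 hab with h | h
        · exact ⟨b, orbit_subset h, subset_rfl⟩
        · exact ⟨a, subset_rfl, orbit_subset h⟩
    obtain ⟨x, hx⟩ := IsCompact.nonempty_iInter_of_directed_nonempty_isCompact_isClosed _ directed
      (fun a => orbit_nonempty a a.1.2) (fun a => orbit_compact a)
      fun a => (orbit_compact a).isClosed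
    rw [Set.mem_iInter] at hx
    exact ⟨⟨x, (hx hne.to_subtype.some).2⟩, fun a ha => hx ⟨a, ha⟩⟩
  obtain ⟨a, ha⟩ := orbit_nonempty m m.2
  obtain ⟨⟨q, hq, hqm⟩, -⟩ := orbit_subset ha (hm ⟨a, ha.2⟩ ha)
  exact ⟨m, m.2, q, hq, hqm⟩

@[to_additive]
theorem exists_idempotent_mul_eq_self_of_isCompact [TopologicalSpace M] [T2Space M]
    (hcont : ∀ r : M, Continuous (· * r)) {S K : Set M} (hS : IsCompact S)
    (hSmul : ∀ a ∈ S, ∀ b ∈ S, a * b ∈ S) (hK : IsCompact K) (hKne : K.Nonempty)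
    (hSK : ∀ p ∈ K, ∃ q ∈ S, q * p ∈ K) : ∃ p ∈ K, ∃ e ∈ S, e * p = p ∧ e * e = e := by
  obtain ⟨p, hp, q, hq, hqp⟩ := exists_mul_eq_self_of_isCompact hcont hS hSmul hK hKne hSK
  have stabilizer_compact : IsCompact (S ∩ {q | q * p = p}) :=
    hS.inter_right (isClosed_singleton.preimage (hcont p))
  have stabilizer_mul : ∀ a ∈ S ∩ {q | q * p = p}, ∀ b ∈ S ∩ {q | q * p = p},
      a * b ∈ S ∩ {q | q * p = p} := by
    rintro a ⟨haS, hap : a * p = p⟩ b ⟨hbS, hbp : b * p = p⟩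
    exact ⟨hSmul a haS b hbS, show a * b * p = p by rw [mul_assoc, hbp, hap]⟩
  obtain ⟨e, ⟨heS, hep⟩, hee⟩ := exists_idempotent_in_compact_subsemigroup hcont
    (S ∩ {q | q * p = p}) ⟨q, hq, hqp⟩ stabilizer_compact stabilizer_mul
  exact ⟨p, hp, e, heS, hep, hee⟩

@[to_additive]
theorem exists_subset_forall_eventually_mul_mem {e : Ultrafilter M} (he : e * e = e) {A : Set M}
    (hA : A ∈ e) : ∃ B ⊆ A, B ∈ e ∧ ∀ u ∈ B, ∀ᶠ w in (e : Filter M), u * w ∈ B := by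
  have eventually_eventually {P : M → Prop} (hP : ∀ᶠ w in (e : Filter M), P w) :
      ∀ᶠ w in (e : Filter M), ∀ᶠ v in (e : Filter M), P (w * v) := by
    rwa [← he] at hP
  refine ⟨{u | u ∈ A ∧ ∀ᶠ w in (e : Filter M), u * w ∈ A}, fun u hu => hu.1,
    inter_mem hA (eventually_eventually hA), fun u hu => hu.2.and ?_⟩
  simpa only [mul_assoc] using eventually_eventually hu.2

end Semigroup

theorem exists_seq_of_forall_finite_exists_insert {α : Type*} {Q : Set α → Prop}
    {R : α → Set α → Prop} (hempty : Q ∅)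
    (hstep : ∀ Z : Set α, Z.Finite → Q Z → ∃ z, R z Z ∧ Q (insert z Z)) :
    ∃ x : ℕ → α, ∀ n, R (x n) (x '' Set.Iio n) := by
  obtain ⟨z₀, -⟩ := hstep ∅ Set.finite_empty hempty
  obtain ⟨x, hx⟩ := Set.seq_of_forall_finite_exists
    (P := fun z Z => Q Z → R z Z ∧ Q (insert z Z)) fun Z hZ => by
      by_cases hQ : Q Z
      · exact (hstep Z hZ hQ).imp fun z hz _ => hz
      · exact ⟨z₀, fun h => absurd h hQ⟩
  have hQ (n : ℕ) : Q (x '' Set.Iio n) := by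
    induction n with
    | zero => simpa using hempty
    | succ n ih =>
      rw [← Order.succ_eq_add_one, Order.Iio_succ_eq_insert, Set.image_insert_eq]
      exact (hx n ih).2
  exact ⟨x, fun n => (hx n (hQ n)).1⟩

theorem exists_ne_zero_forall_dual_eq_zero {k V ι : Type*} [DivisionRing k] [AddCommGroup V]
    [Module k V] [Finite ι] (hinf : ¬ FiniteDimensional k V) (f : ι → V →ₗ[k] k) :
    ∃ v ≠ 0, ∀ i, f i v = 0 := by
  by_contra! h
  refine hinf (FiniteDimensional.of_injective (LinearMap.pi f) ?_)
  refine (injective_iff_map_eq_zero _).2 fun v hv => by_contra fun hv0 => ?_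
  obtain ⟨i, hi⟩ := h v hv0
  exact hi (congrFun hv i)

theorem exists_norm_eq_one_forall_norm_le_norm_add {X : Type*} [NormedAddCommGroup X]
    [NormedSpace ℝ X] (hinf : ¬ FiniteDimensional ℝ X) (F : Finset X) :
    ∃ w : X, ‖w‖ = 1 ∧ ∀ y ∈ F, ‖y‖ ≤ ‖y + w‖ := by
  choose g hg_norm hg_self using fun y : X => exists_dual_vector'' ℝ y
  obtain ⟨v, hv, hgv⟩ := exists_ne_zero_forall_dual_eq_zero hinf fun y : F => (g y : X →ₗ[ℝ] ℝ)
  refine ⟨normalize v, norm_normalize hv, fun y hy => ?_⟩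
  have hgv : g y v = 0 := hgv ⟨y, hy⟩
  calc
    ‖y‖ = g y (y + normalize v) := by simp [NormedSpace.normalize, hgv, hg_self]
    _ ≤ ‖g y (y + normalize v)‖ := le_abs_self _
    _ ≤ ‖y + normalize v‖ := (g y).le_of_opNorm_le_of_le (hg_norm y) le_rfl |>.trans_eq (one_mul _)

theorem norm_normalize_sub_self {X : Type*} [NormedAddCommGroup X] [NormedSpace ℝ X] {x : X}
    (hx : x ≠ 0) : ‖normalize x - x‖ = |‖x‖ - 1| := by
  have h : normalize x - x = (1 - ‖x‖) • normalize x := by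
    rw [sub_smul, one_smul, norm_smul_normalize]
  rw [h, norm_smul, norm_normalize hx, mul_one, Real.norm_eq_abs, abs_sub_comm]

/-- The unit sphere of `X` contains a `lam`-separated sequence. -/
def HasSeparatedSphereSeq (X : Type*) [Norm X] [Sub X] (lam : ℝ) : Prop :=
  ∃ x : ℕ → X, (∀ i, ‖x i‖ = 1) ∧ ∀ i j : ℕ, i ≠ j → lam ≤ ‖x i - x j‖

theorem HasSeparatedSphereSeq.of_forall_approx {X : Type*} [NormedAddCommGroup X] [NormedSpace ℝ X]
    {c lam : ℝ} (hlam : lam < c)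
    (happrox : ∀ η > 0, ∃ z : ℕ → X, (∀ n, |‖z n‖ - 1| ≤ η) ∧
      ∀ m n, m < n → c - η ≤ ‖z m - z n‖) : HasSeparatedSphereSeq X lam := by
  obtain ⟨η, hη, hη_lt⟩ : ∃ η > 0, η < min ((c - lam) / 3) 1 :=
    exists_between (lt_min (by linarith) one_pos)
  obtain ⟨hηc, hη_one⟩ := lt_min_iff.1 hη_lt
  obtain ⟨z, hz_norm, hz_sep⟩ := happrox η hη
  have hz_ne (n : ℕ) : z n ≠ 0 := fun h => by
    have := hz_norm n
    simp only [h, norm_zero, zero_sub, abs_neg, abs_one] at this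
    linarith
  have hdist (n : ℕ) : dist (z n) (normalize (z n)) ≤ η := by
    rw [dist_comm, dist_eq_norm, norm_normalize_sub_self (hz_ne n)]
    exact hz_norm n
  refine ⟨fun n => normalize (z n), fun n => norm_normalize (hz_ne n), fun i j hij => ?_⟩
  wlog h : i < j generalizing i j
  · rw [norm_sub_rev]
    exact this j i hij.symm (hij.lt_or_gt.resolve_left h)
  have hsep := hz_sep i j h
  rw [← dist_eq_norm] at hsep ⊢
  have htri := dist_triangle4_right (z i) (z j) (normalize (z i)) (normalize (z j))
  linarith [hdist i, hdist j]

section Asymptotic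

/-- For every vector `y`, the limit of `‖y + w‖` as `w` runs along `p` is at least `‖y‖`. Like the
two notions below, this is phrased with eventual strict inequalities, which needs no boundedness of
the norm along `p` and defines a closed set of ultrafilters. -/
def AsympMonotone {X : Type*} [Norm X] [Add X] (p : Ultrafilter X) : Prop :=
  ∀ y : X, ∀ c < ‖y‖, ∀ᶠ w in (p : Filter X), c < ‖y + w‖

/-- The limit of the norm along `p`, possibly infinite, is at least `r`. -/
def AsympNormGE {X : Type*} [Norm X] (r : ℝ) (p : Ultrafilter X) : Prop :=
  ∀ c < r, ∀ᶠ w in (p : Filter X), c < ‖w‖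

/-- The limit of the norm along `p` is at most `r`. -/
def AsympNormLE {X : Type*} [Norm X] (r : ℝ) (p : Ultrafilter X) : Prop :=
  ∀ c > r, ∀ᶠ w in (p : Filter X), ‖w‖ < c

theorem isClosed_setOf_asympMonotone {X : Type*} [Norm X] [Add X] :
    IsClosed {p : Ultrafilter X | AsympMonotone p} := by
  simp only [AsympMonotone, Set.ofPred_forall]
  exact isClosed_iInter fun y => isClosed_iInter fun c => isClosed_iInter fun _ =>
    ultrafilter_isClosed_basic {w | c < ‖y + w‖}

theorem isClosed_setOf_asympNormGE {X : Type*} [Norm X] (r : ℝ) :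
    IsClosed {p : Ultrafilter X | AsympNormGE r p} := by
  simp only [AsympNormGE, Set.ofPred_forall]
  exact isClosed_iInter fun c => isClosed_iInter fun _ =>
    ultrafilter_isClosed_basic {w | c < ‖w‖}

theorem isClosed_setOf_asympNormLE {X : Type*} [Norm X] (r : ℝ) :
    IsClosed {p : Ultrafilter X | AsympNormLE r p} := by
  simp only [AsympNormLE, Set.ofPred_forall]
  exact isClosed_iInter fun c => isClosed_iInter fun _ =>
    ultrafilter_isClosed_basic {w | ‖w‖ < c}

theorem AsympMonotone.add {X : Type*} [Norm X] [AddSemigroup X] {p q : Ultrafilter X}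
    (hp : AsympMonotone p) (hq : AsympMonotone q) : AsympMonotone (p + q) := by
  intro y c hc
  rw [Ultrafilter.eventually_add]
  filter_upwards [hp y c hc] with w hw
  simpa only [add_assoc] using hq (y + w) c hw

theorem AsympNormGE.add_asympMonotone {X : Type*} [Norm X] [Add X] {r : ℝ} {p q : Ultrafilter X}
    (hp : AsympNormGE r p) (hq : AsympMonotone q) : AsympNormGE r (p + q) := by
  intro c hc
  rw [Ultrafilter.eventually_add]
  filter_upwards [hp c hc] with w hw using hq w c hw

theorem AsympNormLE.of_add_asympMonotone {X : Type*} [Norm X] [Add X] {r : ℝ}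
    {p q : Ultrafilter X} (h : AsympNormLE r (p + q)) (hq : AsympMonotone q) :
    AsympNormLE r p := by
  intro c hc
  obtain ⟨c', hrc', hc'c⟩ := exists_between hc
  have h := h c' hrc'
  rw [Ultrafilter.eventually_add] at h
  filter_upwards [h] with w hw
  by_contra! hcw
  obtain ⟨v, hv, hv'⟩ := (hw.and (hq w c' (hc'c.trans_le hcw))).exists
  exact lt_asymm hv hv'

theorem AsympMonotone.eventually_lt_norm_sub {X : Type*} [SeminormedAddCommGroup X]
    {p : Ultrafilter X} (hp : AsympMonotone p) {y : X} {c : ℝ} (hc : c < ‖y‖) :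
    ∀ᶠ w in (p : Filter X), c < ‖y - w‖ := by
  filter_upwards [hp (-y) c (by rwa [norm_neg])] with w hw
  rwa [norm_sub_rev, sub_eq_neg_add]

theorem AsympMonotone.map_neg {X : Type*} [SeminormedAddCommGroup X] {p : Ultrafilter X}
    (hp : AsympMonotone p) : AsympMonotone (p.map Neg.neg) := fun y c hc => by
  rw [Ultrafilter.coe_map, eventually_map]
  simpa only [← sub_eq_add_neg] using hp.eventually_lt_norm_sub hc

theorem AsympNormGE.map_neg {X : Type*} [SeminormedAddGroup X] {r : ℝ} {p : Ultrafilter X}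
    (hp : AsympNormGE r p) : AsympNormGE r (p.map Neg.neg) := fun c hc => by
  rw [Ultrafilter.coe_map, eventually_map]
  simpa only [norm_neg] using hp c hc

theorem AsympNormGE.eventually_abs_norm_sub_le {X : Type*} [Norm X] {r η : ℝ} {p : Ultrafilter X}
    (hge : AsympNormGE r p) (hle : AsympNormLE r p) (hη : 0 < η) :
    ∀ᶠ w in (p : Filter X), |‖w‖ - r| ≤ η := by
  filter_upwards [hge (r - η) (by linarith), hle (r + η) (by linarith)] with w hw hw'
  rw [abs_sub_le_iff]
  constructor <;> linarith

theorem asympNormLE_map_neg_add_iff {X : Type*} [SeminormedAddCommGroup X] {r : ℝ}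
    {p q : Ultrafilter X} : AsympNormLE r (p.map Neg.neg + q) ↔
      ∀ c > r, ∀ᶠ v in (p : Filter X), ∀ᶠ w in (q : Filter X), ‖v - w‖ < c := by
  simp only [AsympNormLE, Ultrafilter.eventually_add, Ultrafilter.coe_map, eventually_map,
    neg_add_eq_sub, norm_sub_rev]

variable {X : Type*} [NormedAddCommGroup X] [NormedSpace ℝ X]

theorem asympNormLE_map_neg_add_self {r : ℝ} (hns : ∀ lam > r, ¬ HasSeparatedSphereSeq X lam)
    {p : Ultrafilter X} (hge : AsympNormGE 1 p) (hle : AsympNormLE 1 p) :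
    AsympNormLE r (p.map Neg.neg + p) := by
  refine asympNormLE_map_neg_add_iff.2 fun c hc => ?_
  by_contra hfar
  simp only [Ultrafilter.eventually_not.symm, not_lt] at hfar
  obtain ⟨lam, hr, hlam⟩ := exists_between hc
  refine hns lam hr (.of_forall_approx hlam fun η hη => ?_)
  obtain ⟨z, hz, hz_sep⟩ := exists_seq_of_forall_finset_exists
    (fun v : X => |‖v‖ - 1| ≤ η ∧ ∀ᶠ w in (p : Filter X), c ≤ ‖v - w‖)
    (fun v w => c ≤ ‖v - w‖) fun s hs =>
      (((hge.eventually_abs_norm_sub_le hle hη).and hfar).and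
        ((eventually_all_finset s).2 fun v hv => (hs v hv).2)).exists
  exact ⟨z, fun n => (hz n).1, fun m n hmn => by linarith [hz_sep m n hmn]⟩

theorem exists_asympMonotone_asympNorm_eq_one (hinf : ¬ FiniteDimensional ℝ X) :
    ∃ p : Ultrafilter X, AsympMonotone p ∧ AsympNormGE 1 p ∧ AsympNormLE 1 p := by
  classical
  choose w hw_norm hw_add using exists_norm_eq_one_forall_norm_le_norm_add hinf
  refine ⟨(Ultrafilter.of atTop).map w, fun y c hc => ?_, fun c hc => ?_, fun c hc => ?_⟩
  · rw [Ultrafilter.coe_map, eventually_map]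
    filter_upwards [Ultrafilter.of_le atTop (eventually_ge_atTop {y})] with F hF
    exact hc.trans_le (hw_add F y (Finset.singleton_subset_iff.1 hF))
  · rw [Ultrafilter.coe_map, eventually_map]
    exact Eventually.of_forall fun F => (hw_norm F).symm ▸ hc
  · rw [Ultrafilter.coe_map, eventually_map]
    exact Eventually.of_forall fun F => (hw_norm F).symm ▸ hc

theorem exists_idempotent_asympMonotone_asympNorm_eq_one (hinf : ¬ FiniteDimensional ℝ X)
    (hneg : ∀ p : Ultrafilter X, AsympNormGE 1 p → AsympNormLE 1 p →
      AsympNormLE 1 (p.map Neg.neg + p)) :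
    ∃ e : Ultrafilter X, AsympMonotone e ∧ AsympNormGE 1 e ∧ AsympNormLE 1 e ∧ e + e = e := by
  let S : Set (Ultrafilter X) := {p | AsympMonotone p} ∩ {p | AsympNormGE 1 p}
  have hS : IsClosed S := isClosed_setOf_asympMonotone.inter (isClosed_setOf_asympNormGE 1)
  have hSadd : ∀ p ∈ S, ∀ q ∈ S, p + q ∈ S := fun p hp q hq =>
    ⟨hp.1.add hq.1, hp.2.add_asympMonotone hq.1⟩
  have hSneg : ∀ p ∈ S, p.map Neg.neg ∈ S := fun p hp => ⟨hp.1.map_neg, hp.2.map_neg⟩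
  have hK : IsClosed (S ∩ {p | AsympNormLE 1 p}) := hS.inter (isClosed_setOf_asympNormLE 1)
  have hKne : (S ∩ {p | AsympNormLE 1 p}).Nonempty :=
    let ⟨p, hp, hge, hle⟩ := exists_asympMonotone_asympNorm_eq_one hinf
    ⟨p, ⟨hp, hge⟩, hle⟩
  obtain ⟨p, ⟨hpS, hple⟩, e, he, hep, hee⟩ := exists_idempotent_add_eq_self_of_isCompact
    Ultrafilter.continuous_add_left hS.isCompact hSadd hK.isCompact hKne
    fun p hp => ⟨_, hSneg p hp.1, hSadd _ (hSneg p hp.1) p hp.1, hneg p hp.1.2 hp.2⟩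
  exact ⟨e, he.1, he.2, AsympNormLE.of_add_asympMonotone (hep.symm ▸ hple) hpS.1, hee⟩

theorem AsympMonotone.eventually_extend_separated {e : Ultrafilter X} (he : AsympMonotone e)
    (hge : AsympNormGE 1 e) {η : ℝ} (hη : 0 < η) {u : X} (hu : 1 - η < ‖u‖)
    (hu' : ∀ᶠ w in (e : Filter X), ‖u - w‖ < 1 + η) {Z : Set X} (hZ : Z.Finite)
    (hZu : ∀ z ∈ Z, 2 - η < ‖z - u‖) :
    ∀ᶠ w in (e : Filter X), (|‖u - w‖ - 1| ≤ η ∧ ∀ z ∈ Z, 2 - η ≤ ‖z - (u - w)‖) ∧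
      ∀ z ∈ insert (u - w) Z, 2 - η < ‖z - (u + w)‖ := by
  filter_upwards [hu', he.eventually_lt_norm_sub hu, hge (1 - η / 2) (by linarith),
    (eventually_all_finite hZ).2 fun z hz => he _ _ (hZu z hz),
    (eventually_all_finite hZ).2 fun z hz => he.eventually_lt_norm_sub (hZu z hz)]
    with w hlt hgt hw hadd hsub
  refine ⟨⟨by rw [abs_sub_le_iff]; constructor <;> linarith, fun z hz => ?_⟩, ?_⟩
  · rw [← sub_add]
    exact (hadd z hz).le
  · rintro z (rfl | hz)
    · have hdiff : u - w - (u + w) = (-2 : ℝ) • w := by module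
      rw [hdiff, norm_smul, norm_neg, Real.norm_ofNat]
      linarith
    · rw [← sub_sub]
      exact hsub z hz

theorem hasSeparatedSphereSeq_of_idempotent {e : Ultrafilter X} (he : AsympMonotone e)
    (hge : AsympNormGE 1 e) (hneg : AsympNormLE 1 (e.map Neg.neg + e)) (hee : e + e = e)
    {lam : ℝ} (hlam : lam < 2) : HasSeparatedSphereSeq X lam := by
  refine .of_forall_approx hlam fun η hη => ?_
  have typical : ∀ᶠ u in (e : Filter X), 1 - η < ‖u‖ ∧ ∀ᶠ w in (e : Filter X), ‖u - w‖ < 1 + η :=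
    (hge _ (by linarith)).and (asympNormLE_map_neg_add_iff.1 hneg _ (by linarith))
  obtain ⟨B, hB_typical, hB, hB_add⟩ := exists_subset_forall_eventually_add_mem hee typical
  obtain ⟨u₀, hu₀⟩ := Ultrafilter.nonempty_of_mem hB
  obtain ⟨z, hz⟩ := exists_seq_of_forall_finite_exists_insert
    (Q := fun Z => ∃ u ∈ B, ∀ y ∈ Z, 2 - η < ‖y - u‖)
    (R := fun z Z => |‖z‖ - 1| ≤ η ∧ ∀ y ∈ Z, 2 - η ≤ ‖y - z‖)
    ⟨u₀, hu₀, by simp⟩ <| by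
      rintro Z hZ ⟨u, hu, hZu⟩
      obtain ⟨hu_norm, hu_sub⟩ := hB_typical hu
      obtain ⟨w, ⟨hR, hQ⟩, huw⟩ :=
        ((he.eventually_extend_separated hge hη hu_norm hu_sub hZ hZu).and (hB_add u hu)).exists
      exact ⟨u - w, hR, u + w, huw, hQ⟩
  exact ⟨z, fun n => (hz n).1, fun m n hmn => (hz n).2 _ (Set.mem_image_of_mem z hmn)⟩

end Asymptotic

theorem elton_odell_general {X : Type*} [NormedAddCommGroup X] [NormedSpace ℝ X]
    (hinf : ¬ FiniteDimensional ℝ X) :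
    ∃ lam : ℝ, 1 < lam ∧ ∃ x : ℕ → X, (∀ i, ‖x i‖ = 1) ∧
      ∀ i j : ℕ, i ≠ j → lam ≤ ‖x i - x j‖ := by
  change ∃ lam : ℝ, 1 < lam ∧ HasSeparatedSphereSeq X lam
  by_contra! hns
  have hneg (p : Ultrafilter X) (hge : AsympNormGE 1 p) (hle : AsympNormLE 1 p) :
      AsympNormLE 1 (p.map Neg.neg + p) := asympNormLE_map_neg_add_self hns hge hle
  obtain ⟨e, he, hge, hle, hee⟩ := exists_idempotent_asympMonotone_asympNorm_eq_one hinf hneg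
  exact hns (3 / 2) (by norm_num)
    (hasSeparatedSphereSeq_of_idempotent he hge (hneg e hge hle) hee (by norm_num))

theorem elton_odell
    {X : Type} [NormedAddCommGroup X] [NormedSpace ℝ X] [CompleteSpace X]
    (hinf : ¬ FiniteDimensional ℝ X) :
    ∃ lam : ℝ, 1 < lam ∧ ∃ x : ℕ → X, (∀ i, ‖x i‖ = 1) ∧
      ∀ i j : ℕ, i ≠ j → lam ≤ ‖x i - x j‖ :=
  elton_odell_general hinf
end
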